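/- Let δ > 0 and let ψ : ℕ → ℝ_{≥0} be a function satisfying ψ(q) = O(q^{-δ}). For any y ∈ ℝ², if ∑_{q=1}^∞ ψ(q)² = ∞, then the set 𝒜_{1,2}(ψ, y) of (ψ, y)-approximable points in [0,1)² has Lebesgue measure 1. -/

import Mathlib

open MeasureTheory Real Filter

/-- The unit box `[0,1)²`. -/
def unitBox : Set (Fin 2 → ℝ) := Set.univ.pi fun _ => Set.Ico (0 : ℝ) 1

/-- The set `𝒜_{1,2}(ψ,y)` of `(ψ,y)`-approximable points of `[0,1)²`: those `x` for which
there are infinitely many pairs `(q,p) ∈ ℕ × ℤ²` with `|q·x - p - y| < ψ(q)` (maximum norm). -/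
def approxSet (ψ : ℕ → ℝ) (y : Fin 2 → ℝ) : Set (Fin 2 → ℝ) :=
  {x ∈ unitBox | {qp : ℕ × (Fin 2 → ℤ) |
    ‖(qp.1 : ℝ) • x - (fun i => (qp.2 i : ℝ)) - y‖ < ψ qp.1}.Infinite}


lemma tau_bound (ε : ℝ) (hε : 0 < ε) : ∃ C : ℝ, 0 < C ∧ ∀ n : ℕ, n ≠ 0 →
    (n.divisors.card : ℝ) ≤ C * (n : ℝ) ^ ε := by
  obtain ⟨P, hP⟩ := exists_nat_ge ((2 : ℝ) ^ (1 / ε))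
  set C0 : ℝ := 1 + 1 / (ε * Real.log 2) with hC0
  have hlog : 0 < Real.log 2 := Real.log_pos (by norm_num)
  have hC01 : 1 ≤ C0 := by rw [hC0]; have : 0 < 1 / (ε * Real.log 2) := by positivity
                           linarith
  have hC0pos : 0 < C0 := by linarith
  refine ⟨C0 ^ P, by positivity, fun n hn => ?_⟩
  have h1 : (n : ℝ) ^ ε = ∏ p ∈ n.primeFactors, ((p : ℝ) ^ (n.factorization p)) ^ ε := by
    conv_lhs => rw [← Nat.prod_factorization_pow_eq_self hn]
    rw [Finsupp.prod, Nat.support_factorization]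
    push_cast
    rw [Real.finsetProd_rpow]
    intro i _; positivity
  have key : ∀ p ∈ n.primeFactors, ((n.factorization p + 1 : ℕ) : ℝ) ≤
      (if p < P then C0 else 1) * ((p : ℝ) ^ (n.factorization p)) ^ ε := by
    intro p hp
    have hp2 : (2 : ℝ) ≤ p := by exact_mod_cast (Nat.prime_of_mem_primeFactors hp).two_le
    set v := n.factorization p
    split_ifs with h
    · have h2 : ((2 : ℝ) ^ v) ^ ε ≤ ((p : ℝ) ^ v) ^ ε := by gcongr
      have h3 : 1 + v * (ε * Real.log 2) ≤ ((2 : ℝ) ^ v) ^ ε := by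
        rw [← Real.rpow_natCast, ← Real.rpow_mul (by norm_num), Real.rpow_def_of_pos (by norm_num)]
        have := Real.add_one_le_exp (Real.log 2 * (v * ε))
        linarith
      have h4 : (v : ℝ) + 1 ≤ C0 * (1 + v * (ε * Real.log 2)) := by
        have : C0 * (1 + v * (ε * Real.log 2)) = 1 + v * (ε * Real.log 2) + 1 / (ε * Real.log 2) + v := by
          rw [hC0]; field_simp; ring
        rw [this]
        have : 0 ≤ v * (ε * Real.log 2) := by positivity
        have : 0 < 1 / (ε * Real.log 2) := by positivity
        linarith
      push_cast
      calc (v : ℝ) + 1 ≤ _ := h4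
        _ ≤ C0 * ((p : ℝ) ^ v) ^ ε := by gcongr; linarith
    · have hPp : (2 : ℝ) ^ (1 / ε) ≤ p := hP.trans (by exact_mod_cast not_lt.mp h)
      have h2 : (2 : ℝ) ^ v ≤ ((p : ℝ) ^ v) ^ ε := by
        rw [← Real.rpow_natCast (p : ℝ), ← Real.rpow_mul (by positivity), mul_comm, Real.rpow_mul (by positivity), Real.rpow_natCast]
        gcongr
        calc (2 : ℝ) = ((2 : ℝ) ^ (1 / ε)) ^ ε := by
              rw [← Real.rpow_mul (by norm_num)]; field_simp; simp
          _ ≤ _ := by gcongr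
      have h3 : v + 1 ≤ 2 ^ v := Nat.lt_two_pow_self
      rw [one_mul]
      refine le_trans ?_ h2
      exact_mod_cast h3
  rw [Nat.card_divisors hn]
  push_cast
  calc ∏ p ∈ n.primeFactors, ((n.factorization p : ℝ) + 1)
      ≤ ∏ p ∈ n.primeFactors, ((if p < P then C0 else 1) * ((p : ℝ) ^ (n.factorization p)) ^ ε) := by
        apply Finset.prod_le_prod
        · intro i _; positivity
        · intro i hi; exact_mod_cast key i hi
    _ = (∏ p ∈ n.primeFactors, (if p < P then C0 else 1)) * (n : ℝ) ^ ε := by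
        rw [Finset.prod_mul_distrib, h1]
    _ ≤ C0 ^ P * (n : ℝ) ^ ε := by
        gcongr
        rw [Finset.prod_ite, Finset.prod_const, Finset.prod_const_one, mul_one]
        apply pow_le_pow_right₀ hC01
        calc _ ≤ (Finset.range P).card := by
              apply Finset.card_le_card
              intro x hx; simp at hx ⊢; exact hx.2
          _ = P := by simp

lemma volume_unitBox : volume unitBox = 1 := by
  rw [unitBox, volume_pi_pi]; simp

lemma measurableSet_unitBox : MeasurableSet unitBox :=
  MeasurableSet.univ_pi fun _ => measurableSet_Ico

def openBox : Set (Fin 2 → ℝ) := Set.univ.pi fun _ => Set.Ioo (0 : ℝ) 1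

lemma isOpen_openBox : IsOpen openBox := isOpen_set_pi Set.finite_univ fun _ _ => isOpen_Ioo

lemma openBox_subset : openBox ⊆ unitBox := Set.pi_mono fun _ _ => Set.Ioo_subset_Ico_self

lemma unitBox_diff_openBox : volume (unitBox \ openBox) = 0 := by
  have h1 : (openBox : Set (Fin 2 → ℝ)) =ᵐ[volume] unitBox := by
    have a := Measure.univ_pi_Ioo_ae_eq_Icc (μ := fun _ : Fin 2 => (volume : Measure ℝ)) (f := fun _ => 0) (g := fun _ => 1)
    have b := Measure.univ_pi_Ico_ae_eq_Icc (μ := fun _ : Fin 2 => (volume : Measure ℝ)) (f := fun _ => 0) (g := fun _ => 1)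
    exact a.trans b.symm
  exact (ae_eq_set.mp h1).2

lemma exists_finite_balls (U : Set (Fin 2 → ℝ)) (hU : IsOpen U) (hpos : 0 < volume U)
    (hfin : volume U < ⊤) :
    ∃ (T : Finset (Fin 2 → ℝ)) (r : (Fin 2 → ℝ) → ℝ), (∀ x ∈ T, 0 < r x ∧ Metric.closedBall x (r x) ⊆ U) ∧
      ((T : Set (Fin 2 → ℝ)).PairwiseDisjoint fun x => Metric.closedBall x (r x)) ∧
      volume.real U / 2 ≤ ∑ x ∈ T, volume.real (Metric.closedBall x (r x)) := by
  obtain ⟨t, r, htc, htU, hr, hcov, hdis⟩ := Besicovitch.exists_disjoint_closedBall_covering_ae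
    (volume : Measure (Fin 2 → ℝ)) (fun x => {ρ | Metric.closedBall x ρ ⊆ U}) U
    (by
      intro x hx δ hδ
      obtain ⟨ε, hε, h⟩ := Metric.nhds_basis_closedBall.mem_iff.mp (hU.mem_nhds hx)
      refine ⟨min ε (δ/2), ?_, ?_, ?_⟩
      · exact (Metric.closedBall_subset_closedBall (min_le_left _ _)).trans h
      · positivity
      · exact (min_le_right _ _).trans_lt (by linarith))
    (fun _ => 1) (fun _ _ => one_pos)
  have h1 : volume U ≤ volume (⋃ x ∈ t, Metric.closedBall x (r x)) := by
    have := measure_le_inter_add_sdiff volume U (⋃ x ∈ t, Metric.closedBall x (r x))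
    rw [hcov, add_zero] at this
    exact this.trans (measure_mono Set.inter_subset_right)
  rw [measure_biUnion htc hdis (fun _ _ => measurableSet_closedBall), ENNReal.tsum_eq_iSup_sum] at h1
  have h2 : volume U / 2 < ⨆ s : Finset t, ∑ a ∈ s, volume (Metric.closedBall (a : Fin 2 → ℝ) (r a)) :=
    lt_of_lt_of_le (ENNReal.half_lt_self hpos.ne' hfin.ne) h1
  obtain ⟨s, hs⟩ := lt_iSup_iff.mp h2
  classical
  refine ⟨s.image Subtype.val, r, ?_, ?_, ?_⟩
  · intro x hx
    obtain ⟨a, -, rfl⟩ := Finset.mem_image.mp hx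
    exact ⟨(hr a a.2).2.1, (hr a a.2).1⟩
  · apply hdis.subset
    intro x hx
    obtain ⟨a, -, rfl⟩ := Finset.mem_image.mp hx
    exact a.2
  · rw [Finset.sum_image (fun a _ b _ h => Subtype.ext h)]
    have h3 := ENNReal.toReal_mono (by
      apply (ENNReal.sum_lt_top.mpr fun a _ => ?_).ne
      exact measure_closedBall_lt_top) hs.le
    rw [ENNReal.toReal_sum (fun a _ => measure_closedBall_lt_top.ne), ENNReal.toReal_div] at h3
    simpa [Measure.real] using h3

lemma bc_null (A : ℕ → Set (Fin 2 → ℝ)) (hA : ∀ q, MeasurableSet (A q))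
    (hsub : ∀ q, A q ⊆ unitBox) (w : ℕ → ℝ) (hw : ∀ q, 0 ≤ w q)
    (hdiv : Tendsto (fun n => ∑ q ∈ Finset.range n, w q) atTop atTop) (C c : ℝ) (hC : 0 < C)
    (hc : 0 < c)
    (h2 : ∀ n, ∑ q ∈ Finset.range n, ∑ r ∈ Finset.range n, volume.real (A q ∩ A r) ≤
      C * ((∑ q ∈ Finset.range n, w q) ^ 2 + ∑ q ∈ Finset.range n, w q))
    (hloc : ∀ (z : Fin 2 → ℝ) (ρ : ℝ), 0 < ρ → Metric.closedBall z ρ ⊆ unitBox → ∀ᶠ q in atTop,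
      c * volume.real (Metric.closedBall z ρ) * w q ≤ volume.real (A q ∩ Metric.closedBall z ρ))
    (K : ℕ) (F : Set (Fin 2 → ℝ)) (hF : MeasurableSet F) (hFo : F ⊆ openBox)
    (hFK : ∀ x ∈ F, ∀ n, ∑ q ∈ Finset.range n, (A q).indicator (fun _ => (1 : ℝ)) x ≤ K) :
    volume F = 0 := by
  by_contra hne
  have htop : ∀ s : Set (Fin 2 → ℝ), s ⊆ unitBox → volume s ≠ ⊤ := fun s hs =>
    ((measure_mono hs).trans_lt (by rw [volume_unitBox]; exact ENNReal.one_lt_top)).ne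
  have hFt := htop F (hFo.trans openBox_subset)
  set m := volume.real F with hm
  have hmpos : 0 < m := ENNReal.toReal_pos hne hFt
  set s := 8 * C / (c * m) with hs
  have hspos : 0 < s := by positivity
  set η := c * m / (4 * s) with hη
  have hηpos : 0 < η := by positivity
  obtain ⟨U', hFU', hU'o, -, hU'η⟩ := hF.exists_isOpen_sdiff_lt hFt
    (ε := ENNReal.ofReal η) (by simpa using hηpos)
  set U := U' ∩ openBox with hU
  have hUo : IsOpen U := hU'o.inter isOpen_openBox
  have hFU : F ⊆ U := Set.subset_inter hFU' hFo
  have hUb : U ⊆ unitBox := Set.inter_subset_right.trans openBox_subset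
  have hUt := htop U hUb
  have hUη : volume.real (U \ F) ≤ η := by
    apply ENNReal.toReal_le_of_le_ofReal hηpos.le
    exact (measure_mono (Set.sdiff_subset_sdiff_left Set.inter_subset_left)).trans hU'η.le
  obtain ⟨T, r, hT, hTd, hTs⟩ := exists_finite_balls U hUo
    ((pos_iff_ne_zero.mpr hne).trans_le (measure_mono hFU)) hUt.lt_top
  have hmU : m ≤ volume.real U := measureReal_mono hFU hUt
  have hev : ∀ᶠ q in atTop, ∀ x ∈ T, c * volume.real (Metric.closedBall x (r x)) * w q ≤
      volume.real (A q ∩ Metric.closedBall x (r x)) := by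
    rw [Filter.eventually_all_finset]
    intro x hx
    exact hloc x (r x) (hT x hx).1 ((hT x hx).2.trans hUb)
  obtain ⟨q1, hq1⟩ := eventually_atTop.mp hev
  have hlow : ∀ q, q1 ≤ q → c * m / 2 * w q ≤ volume.real (A q ∩ U) := by
    intro q hq
    calc c * m / 2 * w q ≤ c * (volume.real U / 2) * w q := by
          have := hw q
          gcongr
          rw [mul_div_assoc]; gcongr
      _ ≤ c * (∑ x ∈ T, volume.real (Metric.closedBall x (r x))) * w q := by
          have := hw q
          gcongr
      _ = ∑ x ∈ T, c * volume.real (Metric.closedBall x (r x)) * w q := by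
          rw [Finset.mul_sum, Finset.sum_mul]
      _ ≤ ∑ x ∈ T, volume.real (A q ∩ Metric.closedBall x (r x)) :=
          Finset.sum_le_sum fun x hx => hq1 q hq x hx
      _ = volume.real (⋃ x ∈ T, A q ∩ Metric.closedBall x (r x)) := by
          rw [measureReal_biUnion_finset (hTd.mono fun x => Set.inter_subset_right)
            (fun x _ => (hA q).inter measurableSet_closedBall)
            (fun x _ => htop _ (Set.inter_subset_left.trans (hsub q)))]
      _ ≤ volume.real (A q ∩ U) := by
          apply measureReal_mono _ (htop _ (Set.inter_subset_left.trans (hsub q)))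
          apply Set.iUnion₂_subset
          intro x hx
          exact Set.inter_subset_inter_right _ (hT x hx).2
  set σ : ℕ → ℝ := fun n => ∑ q ∈ Finset.range n, w q with hσ
  have hσmono : ∀ n, σ n ≤ σ q1 + ∑ q ∈ Finset.range n, if q1 ≤ q then w q else 0 := by
    intro n
    have : ∀ q ∈ Finset.range n, w q = (if q < q1 then w q else 0) + (if q1 ≤ q then w q else 0) := by
      intro q _
      rcases lt_or_ge q q1 with h | h
      · simp [h]
      · simp [h, not_lt.mpr h]
    rw [hσ]; simp only
    rw [Finset.sum_congr rfl this, Finset.sum_add_distrib]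
    gcongr
    rw [← Finset.sum_filter]
    apply Finset.sum_le_sum_of_subset_of_nonneg
    · intro x hx; simp at hx ⊢; exact hx.2
    · intro i _ _; exact hw i
  have hmain : ∀ n, 1 ≤ σ n → c * m / 2 * (σ n - σ q1) ≤ K * m + c * m / 4 * σ n := by
    intro n hn
    set f : (Fin 2 → ℝ) → ℝ := fun x => ∑ q ∈ Finset.range n, (A q).indicator (fun _ => (1 : ℝ)) x with hf
    have hσpos : 0 < σ n := by linarith
    have iI : ∀ S : Set (Fin 2 → ℝ), MeasurableSet S → S ⊆ unitBox →
        Integrable (S.indicator fun _ => (1 : ℝ)) volume := fun S hS hSb =>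
      (integrable_indicator_iff hS).mpr (integrableOn_const (htop S hSb))
    have vI : ∀ S : Set (Fin 2 → ℝ), MeasurableSet S →
        ∫ x, S.indicator (fun _ => (1 : ℝ)) x = volume.real S := fun S hS => by
      exact integral_indicator_one hS
    have f2 : ∀ x, f x ^ 2 = ∑ q ∈ Finset.range n, ∑ r ∈ Finset.range n,
        (A q ∩ A r).indicator (fun _ => (1 : ℝ)) x := by
      intro x
      rw [sq, hf]; simp only
      rw [Finset.sum_mul_sum]
      refine Finset.sum_congr rfl fun q _ => Finset.sum_congr rfl fun r _ => ?_
      by_cases h1 : x ∈ A q <;> by_cases h2 : x ∈ A r <;> simp [h1, h2]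
    have fU : ∀ x, U.indicator f x = ∑ q ∈ Finset.range n, (A q ∩ U).indicator (fun _ => (1 : ℝ)) x := by
      intro x
      by_cases h1 : x ∈ U
      · rw [Set.indicator_of_mem h1, hf]
        refine Finset.sum_congr rfl fun q _ => ?_
        by_cases h2 : x ∈ A q <;> simp [h1, h2]
      · rw [Set.indicator_of_notMem h1]
        symm; apply Finset.sum_eq_zero; intro q _
        simp [h1]
    have pw : ∀ x, U.indicator f x ≤ K * F.indicator (fun _ => (1 : ℝ)) x + (f x ^ 2) * (1 / (2 * s * σ n)) +
        (s * σ n / 2) * (U \ F).indicator (fun _ => (1 : ℝ)) x := by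
      intro x
      have hp : 0 ≤ (f x ^ 2) * (1 / (2 * s * σ n)) := by positivity
      by_cases hxU : x ∈ U
      · by_cases hxF : x ∈ F
        · have := hFK x hxF n
          simp only [hxU, hxF, Set.indicator_of_mem, Set.mem_sdiff, not_true_eq_false, and_false,
            not_false_eq_true, Set.indicator_of_notMem, mul_zero, mul_one, add_zero]
          linarith
        · simp only [hxU, hxF, Set.indicator_of_mem, Set.mem_sdiff, not_false_eq_true, and_true,
            Set.indicator_of_notMem, mul_zero, mul_one, zero_add]
          have e : (f x ^ 2) * (1 / (2 * s * σ n)) + (s * σ n / 2) - f x =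
            (f x - s * σ n) ^ 2 * (1 / (2 * s * σ n)) := by field_simp; ring
          have : 0 ≤ (f x - s * σ n) ^ 2 * (1 / (2 * s * σ n)) := by positivity
          linarith
      · have hxF : x ∉ F := fun h => hxU (hFU h)
        simp only [hxU, hxF, Set.mem_sdiff, false_and,
            not_false_eq_true, Set.indicator_of_notMem, mul_zero, add_zero, zero_add]
        exact hp
    have iU : Integrable (fun x => U.indicator f x) volume := by
      simp_rw [fU]
      exact integrable_finsetSum _ fun q _ => iI _ ((hA q).inter hUo.measurableSet) (Set.inter_subset_left.trans (hsub q))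
    have i2 : Integrable (fun x => f x ^ 2) volume := by
      simp_rw [f2]
      exact integrable_finsetSum _ fun q _ => integrable_finsetSum _ fun r _ =>
        iI _ ((hA q).inter (hA r)) (Set.inter_subset_left.trans (hsub q))
    have iF := iI F hF (hFo.trans openBox_subset)
    have iUF := iI (U \ F) (hUo.measurableSet.diff hF) (Set.sdiff_subset.trans hUb)
    have hIneq := integral_mono iU (((iF.const_mul (K : ℝ)).add (i2.mul_const (1 / (2 * s * σ n)))).add
      (iUF.const_mul (s * σ n / 2))) pw
    simp only [Pi.add_apply] at hIneq
    have iFs : Integrable (fun x => K * F.indicator (fun _ => (1 : ℝ)) x + (f x ^ 2) * (1 / (2 * s * σ n))) volume :=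
      (iF.const_mul (K : ℝ)).add (i2.mul_const (1 / (2 * s * σ n)))
    rw [integral_add iFs (iUF.const_mul (s * σ n / 2)),
      integral_add (iF.const_mul (K : ℝ)) (i2.mul_const (1 / (2 * s * σ n))),
      integral_const_mul, integral_const_mul, integral_mul_const, vI _ hF,
      vI _ (hUo.measurableSet.diff hF)] at hIneq
    simp_rw [f2, fU] at hIneq
    rw [integral_finsetSum _ (fun q _ => iI _ ((hA q).inter hUo.measurableSet) (Set.inter_subset_left.trans (hsub q))),
      integral_finsetSum _ (fun q _ => integrable_finsetSum _ fun r _ =>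
        iI _ ((hA q).inter (hA r)) (Set.inter_subset_left.trans (hsub q)))] at hIneq
    have e1 : ∀ q ∈ Finset.range n, ∫ x, (A q ∩ U).indicator (fun _ => (1 : ℝ)) x = volume.real (A q ∩ U) :=
      fun q _ => vI _ ((hA q).inter hUo.measurableSet)
    have e2 : ∀ q ∈ Finset.range n, ∫ x, ∑ r ∈ Finset.range n, (A q ∩ A r).indicator (fun _ => (1 : ℝ)) x =
        ∑ r ∈ Finset.range n, volume.real (A q ∩ A r) := by
      intro q _
      rw [integral_finsetSum _ (fun r _ =>
        iI _ ((hA q).inter (hA r)) (Set.inter_subset_left.trans (hsub q)))]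
      exact Finset.sum_congr rfl fun r _ => vI _ ((hA q).inter (hA r))
    rw [Finset.sum_congr rfl e1, Finset.sum_congr rfl e2] at hIneq
    have lower : c * m / 2 * (σ n - σ q1) ≤ ∑ q ∈ Finset.range n, volume.real (A q ∩ U) := by
      calc c * m / 2 * (σ n - σ q1) ≤ c * m / 2 * ∑ q ∈ Finset.range n, if q1 ≤ q then w q else 0 := by
            gcongr; linarith [hσmono n]
        _ ≤ _ := by
            rw [Finset.mul_sum]
            apply Finset.sum_le_sum
            intro q _
            split_ifs with h
            · exact hlow q h
            · simp
    have u1 : (∑ q ∈ Finset.range n, ∑ r ∈ Finset.range n, volume.real (A q ∩ A r)) * (1 / (2 * s * σ n)) ≤ c * m / 8 * σ n := by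
      calc _ ≤ (C * (σ n ^ 2 + σ n)) * (1 / (2 * s * σ n)) := by gcongr; exact h2 n
        _ ≤ (C * (σ n ^ 2 + σ n ^ 2)) * (1 / (2 * s * σ n)) := by gcongr; nlinarith
        _ = C / s * σ n := by field_simp; ring
        _ = c * m / 8 * σ n := by rw [hs]; field_simp
    have u2 : s * σ n / 2 * volume.real (U \ F) ≤ c * m / 8 * σ n := by
      calc _ ≤ s * σ n / 2 * η := by gcongr
        _ = c * m / 8 * σ n := by rw [hη]; field_simp; ring
    linarith
  obtain ⟨n, hn1, hn2⟩ := ((hdiv.eventually_ge_atTop 1).and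
    (hdiv.eventually_gt_atTop ((K * m + c * m / 2 * σ q1) / (c * m / 4)))).exists
  have := hmain n hn1
  rw [div_lt_iff₀ (by positivity)] at hn2
  change _ < σ n * _ at hn2
  linarith

lemma bc_full (A : ℕ → Set (Fin 2 → ℝ)) (hA : ∀ q, MeasurableSet (A q))
    (hsub : ∀ q, A q ⊆ unitBox) (w : ℕ → ℝ) (hw : ∀ q, 0 ≤ w q)
    (hdiv : Tendsto (fun n => ∑ q ∈ Finset.range n, w q) atTop atTop) (C c : ℝ) (hC : 0 < C)
    (hc : 0 < c)
    (h2 : ∀ n, ∑ q ∈ Finset.range n, ∑ r ∈ Finset.range n, volume.real (A q ∩ A r) ≤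
      C * ((∑ q ∈ Finset.range n, w q) ^ 2 + ∑ q ∈ Finset.range n, w q))
    (hloc : ∀ (z : Fin 2 → ℝ) (ρ : ℝ), 0 < ρ → Metric.closedBall z ρ ⊆ unitBox → ∀ᶠ q in atTop,
      c * volume.real (Metric.closedBall z ρ) * w q ≤ volume.real (A q ∩ Metric.closedBall z ρ)) :
    volume (unitBox \ {x | {q | x ∈ A q}.Infinite}) = 0 := by
  classical
  let F : ℕ → Set (Fin 2 → ℝ) := fun K =>
    openBox ∩ ⋂ n, {x | ∑ q ∈ Finset.range n, (A q).indicator (fun _ => (1 : ℝ)) x ≤ K}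
  have hF : ∀ K, volume (F K) = 0 := by
    intro K
    refine bc_null A hA hsub w hw hdiv C c hC hc h2 hloc K (F K) ?_ Set.inter_subset_left ?_
    · refine isOpen_openBox.measurableSet.inter (MeasurableSet.iInter fun n => ?_)
      refine measurableSet_le ?_ measurable_const
      exact Finset.measurable_fun_sum _ fun q _ => measurable_const.indicator (hA q)
    · intro x hx n
      exact Set.mem_iInter.mp hx.2 n
  have hsubset : unitBox \ {x | {q | x ∈ A q}.Infinite} ⊆ (unitBox \ openBox) ∪ ⋃ K, F K := by
    rintro x ⟨hx, hx2⟩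
    by_cases ho : x ∈ openBox
    · right
      simp only [Set.mem_ofPred_eq, Set.not_infinite] at hx2
      refine Set.mem_iUnion.mpr ⟨hx2.toFinset.card, ho, Set.mem_iInter.mpr fun n => ?_⟩
      simp only [Set.mem_ofPred_eq]
      have e : ∀ q ∈ Finset.range n, (A q).indicator (fun _ => (1 : ℝ)) x = if x ∈ A q then 1 else 0 :=
        fun q _ => by rw [Set.indicator_apply]
      rw [Finset.sum_congr rfl e, ← Finset.sum_filter, Finset.sum_const, nsmul_eq_mul, mul_one]
      norm_cast
      apply Finset.card_le_card
      intro q hq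
      simpa using (Finset.mem_filter.mp hq).2
    · left; exact ⟨hx, ho⟩
  refine measure_mono_null hsubset (measure_union_null unitBox_diff_openBox (measure_iUnion_null hF))

lemma card_int_le (T : Finset ℤ) (a L : ℝ) (hL : 0 ≤ L) (h : ∀ t ∈ T, a ≤ t ∧ (t : ℝ) ≤ a + L) :
    (T.card : ℝ) ≤ L + 1 := by
  have hsub : T ⊆ Finset.Icc ⌈a⌉ ⌊a + L⌋ := by
    intro t ht
    rw [Finset.mem_Icc]
    exact ⟨Int.ceil_le.mpr (h t ht).1, Int.le_floor.mpr (h t ht).2⟩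
  have h1 := Finset.card_le_card hsub
  rw [Int.card_Icc] at h1
  have h2 : (T.card : ℤ) ≤ max (⌊a + L⌋ + 1 - ⌈a⌉) 0 := by
    rw [← Int.toNat_eq_max]; exact_mod_cast h1
  have h3 : (T.card : ℝ) ≤ max ((⌊a + L⌋ : ℝ) + 1 - ⌈a⌉) 0 := by exact_mod_cast h2
  refine h3.trans (max_le ?_ (by linarith))
  linarith [Int.floor_le (a + L), Int.le_ceil a]

lemma card_int_mod_le (T : Finset ℤ) (a L : ℝ) (hL : 0 ≤ L) (h : ∀ t ∈ T, a ≤ t ∧ (t : ℝ) ≤ a + L)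
    (n : ℕ) (hn : 0 < n) (hmod : ∀ t ∈ T, ∀ t' ∈ T, (n : ℤ) ∣ t - t') :
    (T.card : ℝ) ≤ L / n + 1 := by
  rcases T.eq_empty_or_nonempty with rfl | ⟨v, hv⟩
  · simp; positivity
  have hnR : (0 : ℝ) < n := by exact_mod_cast hn
  have hinj : Set.InjOn (fun t : ℤ => (t - v) / (n : ℤ)) T := by
    intro t ht t' ht' heq
    simp only at heq
    have h1 := Int.ediv_mul_cancel (hmod t ht v hv)
    have h2 := Int.ediv_mul_cancel (hmod t' ht' v hv)
    rw [heq] at h1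
    linarith
  rw [← Finset.card_image_of_injOn hinj]
  apply card_int_le _ ((a - v) / n) (L / n) (by positivity)
  intro t ht
  obtain ⟨t', ht', rfl⟩ := Finset.mem_image.mp ht
  have h1 := Int.ediv_mul_cancel (hmod t' ht' v hv)
  have h2 : (((t' - v) / (n : ℤ) : ℤ) : ℝ) = ((t' : ℝ) - v) / n := by
    rw [eq_div_iff hnR.ne']; exact_mod_cast h1
  rw [h2, ← add_div]
  have := h t' ht'
  constructor <;> gcongr <;> linarith

lemma overlap1 (g u v : ℕ) (hg : 0 < g) (hu : 0 < u) (hv : 0 < v) (huv : Nat.Coprime u v)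
    (y a b : ℝ) (ha : 0 ≤ a) (hb : 0 ≤ b) (ha2 : a ≤ 1 / 2) :
    volume {x : ℝ | x ∈ Set.Ico (0 : ℝ) 1 ∧ (∃ p : ℤ, |((g * u : ℕ) : ℝ) * x - p - y| < a) ∧
      ∃ s : ℤ, |((g * v : ℕ) : ℝ) * x - s - y| < b} ≤
      ENNReal.ofReal (24 * (a * b) + 6 * min (a / u) (b / v)) := by
  classical
  have hgR : (0 : ℝ) < g := by exact_mod_cast hg
  have hg1 : (1 : ℝ) ≤ g := by exact_mod_cast hg
  have huR : (0 : ℝ) < u := by exact_mod_cast hu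
  have hu1 : (1 : ℝ) ≤ u := by exact_mod_cast hu
  have hvR : (0 : ℝ) < v := by exact_mod_cast hv
  set R : Set (ℤ × ℤ) := {ps | ∃ x : ℝ, x ∈ Set.Ico (0 : ℝ) 1 ∧
    |((g * u : ℕ) : ℝ) * x - ps.1 - y| < a ∧ |((g * v : ℕ) : ℝ) * x - ps.2 - y| < b} with hR
  have hp : ∀ ps ∈ R, (-y - a ≤ (ps.1 : ℝ) ∧ (ps.1 : ℝ) ≤ -y - a + (g * u + 2 * a)) := by
    rintro ps ⟨x, ⟨hx0, hx1⟩, h1, h2⟩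
    push_cast at h1
    rw [abs_lt] at h1
    have : (g : ℝ) * u * x ≤ g * u * 1 := by gcongr
    have : 0 ≤ (g : ℝ) * u * x := by positivity
    constructor <;> linarith
  have hs : ∀ ps ∈ R, (-y - b ≤ (ps.2 : ℝ) ∧ (ps.2 : ℝ) ≤ -y - b + (g * v + 2 * b)) := by
    rintro ps ⟨x, ⟨hx0, hx1⟩, h1, h2⟩
    push_cast at h2
    rw [abs_lt] at h2
    have : (g : ℝ) * v * x ≤ g * v * 1 := by gcongr
    have : 0 ≤ (g : ℝ) * v * x := by positivity
    constructor <;> linarith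
  have hfin : R.Finite := by
    apply ((Set.finite_Icc ⌈-y - a⌉ ⌊-y - a + (g * u + 2 * a)⌋).prod
      (Set.finite_Icc ⌈-y - b⌉ ⌊-y - b + (g * v + 2 * b)⌋)).subset
    intro ps hps
    exact ⟨⟨Int.ceil_le.mpr (hp ps hps).1, Int.le_floor.mpr (hp ps hps).2⟩,
      ⟨Int.ceil_le.mpr (hs ps hps).1, Int.le_floor.mpr (hs ps hps).2⟩⟩
  set P := hfin.toFinset with hP
  have hPR : ∀ ps, ps ∈ P ↔ ps ∈ R := fun ps => hfin.mem_toFinset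
  set f : ℤ × ℤ → ℤ := fun ps => v * ps.1 - u * ps.2 with hf
  set Y : ℝ := v * a + u * b with hY
  have hYnn : 0 ≤ Y := by positivity
  have himg : ((P.image f).card : ℝ) ≤ 2 * Y + 1 := by
    apply card_int_le _ (-((v : ℝ) - u) * y - Y) _ (by positivity)
    intro t ht
    obtain ⟨ps, hps, rfl⟩ := Finset.mem_image.mp ht
    obtain ⟨x, -, h1, h2⟩ := (hPR ps).mp hps
    rw [abs_lt] at h1 h2
    push_cast at h1 h2
    simp only [hf]
    push_cast
    have a1 := mul_lt_mul_of_pos_left h1.1 hvR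
    have a2 := mul_lt_mul_of_pos_left h1.2 hvR
    have a3 := mul_lt_mul_of_pos_left h2.1 huR
    have a4 := mul_lt_mul_of_pos_left h2.2 huR
    constructor <;> nlinarith
  have hfib : ∀ n ∈ P.image f, (P.filter (fun ps => f ps = n)).card ≤ 3 * g := by
    intro n _
    set Fb := P.filter (fun ps => f ps = n) with hFb
    have hinj : Set.InjOn Prod.fst (Fb : Set (ℤ × ℤ)) := by
      rintro ⟨p, s⟩ h ⟨p', s'⟩ h' heq
      simp only [hFb, Finset.coe_filter, Set.mem_ofPred_eq, hf] at h h' heq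
      have : (u : ℤ) * s = u * s' := by rw [heq] at h; linarith [h.2, h'.2]
      have hu0 : (u : ℤ) ≠ 0 := by exact_mod_cast hu.ne'
      rw [heq, mul_left_cancel₀ hu0 this]
    have h1 : ((Fb.image Prod.fst).card : ℝ) ≤ (g * u + 2 * a) / u + 1 := by
      apply card_int_mod_le _ (-y - a) _ (by positivity) _ u hu
      · intro t ht t' ht'
        obtain ⟨ps, hps, rfl⟩ := Finset.mem_image.mp ht
        obtain ⟨ps', hps', rfl⟩ := Finset.mem_image.mp ht'
        have e1 := (Finset.mem_filter.mp hps).2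
        have e2 := (Finset.mem_filter.mp hps').2
        simp only [hf] at e1 e2
        have : (u : ℤ) ∣ v * (ps.1 - ps'.1) := ⟨ps.2 - ps'.2, by linarith⟩
        exact IsCoprime.dvd_of_dvd_mul_left (Nat.isCoprime_iff_coprime.mpr huv) this
      · intro t ht
        obtain ⟨ps, hps, rfl⟩ := Finset.mem_image.mp ht
        exact hp ps ((hPR ps).mp (Finset.mem_filter.mp hps).1)
    rw [Finset.card_image_of_injOn hinj] at h1
    have h2 : (g * u + 2 * a) / u + 1 ≤ 3 * g := by
      have : (g * u + 2 * a) / u = g + 2 * a / u := by field_simp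
      rw [this]
      have : 2 * a / u ≤ 1 := by rw [div_le_one huR]; linarith
      linarith
    exact_mod_cast h1.trans h2
  have hcard : (P.card : ℝ) ≤ 3 * g * (2 * Y + 1) := by
    have := Finset.card_le_mul_card_image (f := f) P (3 * g) hfib
    calc (P.card : ℝ) ≤ 3 * g * (P.image f).card := by exact_mod_cast this
      _ ≤ _ := by gcongr
  have hmeas : ∀ ps : ℤ × ℤ, volume {x : ℝ | |((g * u : ℕ) : ℝ) * x - ps.1 - y| < a ∧
      |((g * v : ℕ) : ℝ) * x - ps.2 - y| < b} ≤ ENNReal.ofReal (2 * min (a / u) (b / v) / g) := by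
    intro ps
    have ball : ∀ (w : ℕ) (p c : ℝ), 0 < w → {x : ℝ | |((g * w : ℕ) : ℝ) * x - p - y| < c} ⊆
        Metric.ball ((p + y) / (g * w)) (c / (g * w)) := by
      intro w p c hw x hx
      have hwR : (0 : ℝ) < w := by exact_mod_cast hw
      rw [Metric.mem_ball, Real.dist_eq, lt_div_iff₀ (by positivity)]
      have : |x - (p + y) / (g * w)| * (g * w) = |((g * w : ℕ) : ℝ) * x - p - y| := by
        rw [← abs_of_pos (show (0 : ℝ) < g * w by positivity), ← abs_mul, abs_of_pos (show (0 : ℝ) < g * w by positivity)]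
        congr 1; push_cast; field_simp; ring
      rw [this]; exact hx
    rcases min_cases (a / u) (b / v) with ⟨h, -⟩ | ⟨h, -⟩
    · rw [h]
      refine (measure_mono (fun x hx => ball u ps.1 a hu hx.1)).trans ?_
      rw [Real.volume_ball]; apply ENNReal.ofReal_le_ofReal; apply le_of_eq; field_simp
    · rw [h]
      refine (measure_mono (fun x hx => ball v ps.2 b hv hx.2)).trans ?_
      rw [Real.volume_ball]; apply ENNReal.ofReal_le_ofReal; apply le_of_eq; field_simp
  have hmin0 : 0 ≤ min (a / u) (b / v) := by positivity
  calc _ ≤ volume (⋃ ps ∈ P, {x : ℝ | |((g * u : ℕ) : ℝ) * x - ps.1 - y| < a ∧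
      |((g * v : ℕ) : ℝ) * x - ps.2 - y| < b}) := by
        apply measure_mono
        rintro x ⟨hx, ⟨p, h1⟩, ⟨s, h2⟩⟩
        exact Set.mem_iUnion₂.mpr ⟨(p, s), (hPR _).mpr ⟨x, hx, h1, h2⟩, h1, h2⟩
    _ ≤ ∑ ps ∈ P, volume {x : ℝ | |((g * u : ℕ) : ℝ) * x - ps.1 - y| < a ∧
      |((g * v : ℕ) : ℝ) * x - ps.2 - y| < b} := measure_biUnion_finset_le _ _
    _ ≤ ∑ ps ∈ P, ENNReal.ofReal (2 * min (a / u) (b / v) / g) := Finset.sum_le_sum fun ps _ => hmeas ps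
    _ = ENNReal.ofReal (P.card * (2 * min (a / u) (b / v) / g)) := by
        rw [Finset.sum_const, nsmul_eq_mul, ENNReal.ofReal_mul (by positivity), ENNReal.ofReal_natCast]
    _ ≤ _ := by
        apply ENNReal.ofReal_le_ofReal
        calc _ ≤ 3 * g * (2 * Y + 1) * (2 * min (a / u) (b / v) / g) := by gcongr
          _ = 12 * (Y * min (a / u) (b / v)) + 6 * min (a / u) (b / v) := by field_simp; ring
          _ ≤ _ := by
            have : Y * min (a / u) (b / v) ≤ 2 * (a * b) := by
              calc Y * min (a / u) (b / v) = v * a * min (a / u) (b / v) + u * b * min (a / u) (b / v) := by rw [hY]; ring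
                _ ≤ v * a * (b / v) + u * b * (a / u) := by
                    gcongr
                    · exact min_le_right _ _
                    · exact min_le_left _ _
                _ = _ := by field_simp; ring
            linarith

/-- A numerator vector `p` is good for the denominator `q` relative to the rational vector `-c/b`. -/
def goodNum (q : ℕ) (b : ℤ) (c p : Fin 2 → ℤ) : Prop :=
  ¬ ∃ n : ℕ, 2 ≤ n ∧ n ∣ q ∧ ∀ i, (n : ℤ) ∣ b * p i + c i

def goodSet (q : ℕ) (a : ℝ) (y : Fin 2 → ℝ) (b : ℤ) (c : Fin 2 → ℤ) : Set (Fin 2 → ℝ) :=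
  {x | ∃ p : Fin 2 → ℤ, (∀ i, |(q : ℝ) * x i - p i - y i| < a) ∧ goodNum q b c p}

def primVec (b : ℤ) (c : Fin 2 → ℤ) : Prop := ∀ e : ℤ, e ∣ b → (∀ i, e ∣ c i) → IsUnit e

lemma isOpen_goodSet (q : ℕ) (a : ℝ) (y : Fin 2 → ℝ) (b : ℤ) (c : Fin 2 → ℤ) :
    IsOpen (goodSet q a y b c) := by
  have : goodSet q a y b c = ⋃ p : Fin 2 → ℤ, ⋃ (_ : goodNum q b c p),
      ⋂ i, {x : Fin 2 → ℝ | |(q : ℝ) * x i - p i - y i| < a} := by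
    ext x; simp only [goodSet, Set.mem_ofPred_eq, Set.mem_iUnion, Set.mem_iInter, exists_prop]
    exact exists_congr fun p => and_comm
  rw [this]
  refine isOpen_iUnion fun p => isOpen_iUnion fun _ => isOpen_iInter_of_finite fun i => ?_
  exact isOpen_lt (by fun_prop) continuous_const

lemma overlap2 (g u v : ℕ) (hg : 0 < g) (hu : 0 < u) (hv : 0 < v) (huv : Nat.Coprime u v)
    (y : Fin 2 → ℝ) (a b : ℝ) (ha : 0 ≤ a) (hb : 0 ≤ b) (ha2 : a ≤ 1 / 2) (b1 b2 : ℤ) (c1 c2 : Fin 2 → ℤ) :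
    volume.real (unitBox ∩ goodSet (g * u) a y b1 c1 ∩ (unitBox ∩ goodSet (g * v) b y b2 c2)) ≤
      (24 * (a * b) + 6 * min (a / u) (b / v)) ^ 2 := by
  have h0 : 0 ≤ 24 * (a * b) + 6 * min (a / u) (b / v) := by positivity
  apply ENNReal.toReal_le_of_le_ofReal (by positivity)
  calc _ ≤ volume (Set.univ.pi fun i : Fin 2 => {x : ℝ | x ∈ Set.Ico (0 : ℝ) 1 ∧ (∃ p : ℤ, |((g * u : ℕ) : ℝ) * x - p - y i| < a) ∧
      ∃ s : ℤ, |((g * v : ℕ) : ℝ) * x - s - y i| < b}) := by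
        apply measure_mono
        rintro x ⟨⟨hx, p, hp, -⟩, ⟨-, s, hs, -⟩⟩ i -
        exact ⟨hx i (Set.mem_univ _), ⟨p i, hp i⟩, ⟨s i, hs i⟩⟩
    _ = _ := volume_pi_pi _
    _ ≤ ENNReal.ofReal (24 * (a * b) + 6 * min (a / u) (b / v)) ^ 2 := by
        rw [Fin.prod_univ_two, sq]
        gcongr
        · exact overlap1 g u v hg hu hv huv (y 0) a b ha hb ha2
        · exact overlap1 g u v hg hu hv huv (y 1) a b ha hb ha2
    _ = _ := by rw [ENNReal.ofReal_pow h0]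

lemma rat_approx (y : Fin 2 → ℝ) (ε Q : ℝ) (hε : 0 < ε) (hQε : 2 * Q * ε ≤ 1) :
    ∃ (b : ℤ) (c : Fin 2 → ℤ), primVec b c ∧ ∀ (D : ℤ) (n : Fin 2 → ℤ), D ≠ 0 → |(D : ℝ)| ≤ Q →
      (∀ i, |D * y i + n i| < ε) → ∀ i, D * c i + b * n i = 0 := by
  classical
  by_cases hex : ∃ D : ℕ, 0 < D ∧ (D : ℝ) ≤ Q ∧ ∃ n : Fin 2 → ℤ, ∀ i, |D * y i + n i| < ε
  · obtain ⟨hD0, hDQ, n0, hn0⟩ := Nat.find_spec hex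
    have hmin : ∀ D', D' < Nat.find hex → _ := fun D' h => Nat.find_min hex h
    set D0 := Nat.find hex
    refine ⟨D0, fun i => -n0 i, ?_, ?_⟩
    · intro e he hec
      obtain ⟨d, hd⟩ := he
      have hec' : ∀ i, e ∣ n0 i := fun i => (dvd_neg.mp (hec i))
      choose m hm using hec'
      have he0 : e ≠ 0 := by rintro rfl; simp at hd; omega
      by_contra hunit
      have hk : 2 ≤ e.natAbs := by
        have h1 : e.natAbs ≠ 0 := by simpa using he0
        have h2 : e.natAbs ≠ 1 := fun h => hunit (Int.isUnit_iff_natAbs_eq.mpr h)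
        omega
      have hDe : D0 = e.natAbs * d.natAbs := by
        rw [← Int.natAbs_mul, ← hd]; simp
      have hd0 : 0 < d.natAbs := by
        rcases Nat.eq_zero_or_pos d.natAbs with h | h
        · rw [h] at hDe; omega
        · exact h
      have hlt : d.natAbs < D0 := by rw [hDe]; nlinarith
      apply hmin _ hlt
      refine ⟨hd0, ?_, ?_⟩
      · refine le_trans ?_ hDQ; exact_mod_cast hlt.le
      · have hee : (1 : ℝ) ≤ |(e : ℝ)| := by
          have : (1 : ℤ) ≤ |e| := Int.one_le_abs he0
          exact_mod_cast this
        have key : ∀ i, |(d : ℝ) * y i + m i| < ε := by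
          intro i
          have h1 := hn0 i
          have e1 : (D0 : ℝ) * y i + n0 i = e * (d * y i + m i) := by
            rw [hm i]
            have : (D0 : ℝ) = e * d := by exact_mod_cast hd
            rw [this]; push_cast; ring
          rw [e1, abs_mul] at h1
          nlinarith [abs_nonneg ((d : ℝ) * y i + m i)]
        rcases Int.natAbs_eq d with h | h
        · refine ⟨m, fun i => ?_⟩
          have h3 : ((d.natAbs : ℕ) : ℝ) = d := by
            conv_rhs => rw [h]
            simp
          rw [h3]; exact key i
        · refine ⟨fun i => - m i, fun i => ?_⟩
          have h3 : ((d.natAbs : ℕ) : ℝ) = -d := by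
            conv_rhs => rw [h]
            simp
          rw [h3]
          have : -(d : ℝ) * y i + ((- m i : ℤ) : ℝ) = -(d * y i + m i) := by push_cast; ring
          rw [this, abs_neg]; exact key i
    · intro D n hDne hDQ' hn i
      have hDpos : 0 < |(D : ℝ)| := abs_pos.mpr (by exact_mod_cast hDne)
      have hD0pos : (0 : ℝ) < D0 := by exact_mod_cast hD0
      have h1 : |((D * -n0 i + D0 * n i : ℤ) : ℝ)| < 1 := by
        have e : ((D * -n0 i + D0 * n i : ℤ) : ℝ) = -(D * (D0 * y i + n0 i)) + D0 * (D * y i + n i) := by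
          push_cast; ring
        rw [e]
        calc _ ≤ |-(D * (D0 * y i + n0 i))| + |D0 * (D * y i + n i)| := abs_add_le _ _
          _ = |(D : ℝ)| * |D0 * y i + n0 i| + D0 * |D * y i + n i| := by
              rw [abs_neg, abs_mul, abs_mul (D0 : ℝ), abs_of_pos hD0pos]
          _ < |(D : ℝ)| * ε + D0 * ε := by
              have := hn0 i
              have := hn i
              gcongr
          _ ≤ Q * ε + Q * ε := by gcongr
          _ ≤ 1 := by linarith
      have h2 : |D * -n0 i + D0 * n i| < 1 := by exact_mod_cast h1
      exact Int.abs_lt_one_iff.mp h2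
  · refine ⟨0, fun _ => 1, fun e _ h => isUnit_of_dvd_one (h 0), ?_⟩
    intro D n hD hDQ hn
    exfalso
    apply hex
    refine ⟨D.natAbs, by simpa [Int.natAbs_pos] using hD, ?_, ?_⟩
    · rw [Nat.cast_natAbs]; exact_mod_cast hDQ
    · rcases Int.natAbs_eq D with h | h
      · refine ⟨n, fun i => ?_⟩
        have h3 : ((D.natAbs : ℕ) : ℝ) = D := by
          conv_rhs => rw [h]
          simp
        rw [h3]; exact hn i
      · refine ⟨fun i => - n i, fun i => ?_⟩
        have h3 : ((D.natAbs : ℕ) : ℝ) = -D := by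
          conv_rhs => rw [h]
          simp
        rw [h3]
        have : -(D : ℝ) * y i + ((- n i : ℤ) : ℝ) = -(D * y i + n i) := by push_cast; ring
        rw [this, abs_neg]; exact hn i

lemma good_disjoint (g u v : ℕ) (hu : 0 < u) (hv : 0 < v) (huv : Nat.Coprime u v)
    (hne : u ≠ v) (y : Fin 2 → ℝ) (a a' ε Q : ℝ) (b : ℤ) (c : Fin 2 → ℤ)
    (hbc : ∀ (D : ℤ) (n : Fin 2 → ℤ), D ≠ 0 → |(D : ℝ)| ≤ Q →
      (∀ i, |D * y i + n i| < ε) → ∀ i, D * c i + b * n i = 0)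
    (huQ : (u : ℝ) ≤ Q) (hvQ : (v : ℝ) ≤ Q) (hε : v * a + u * a' ≤ ε) :
    goodSet (g * u) a y b c ∩ goodSet (g * v) a' y b c = ∅ := by
  rw [Set.eq_empty_iff_forall_notMem]
  rintro x ⟨⟨p, hp, hpg⟩, ⟨s, hs, hsg⟩⟩
  have huR : (0 : ℝ) < u := by exact_mod_cast hu
  have hvR : (0 : ℝ) < v := by exact_mod_cast hv
  have h1 := hbc ((v : ℤ) - u) (fun i => v * p i - u * s i)
    (by intro h; apply hne; omega)
    (by push_cast; rw [abs_le]; constructor <;> linarith)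
    (by
      intro i
      have h1 := hp i
      have h2 := hs i
      rw [abs_lt] at h1 h2 ⊢
      push_cast at h1 h2 ⊢
      have a1 := mul_lt_mul_of_pos_left h1.1 hvR
      have a2 := mul_lt_mul_of_pos_left h1.2 hvR
      have a3 := mul_lt_mul_of_pos_left h2.1 huR
      have a4 := mul_lt_mul_of_pos_left h2.2 huR
      constructor <;> nlinarith)
  have h2 : ∀ i, (v : ℤ) * (b * p i + c i) = u * (b * s i + c i) := fun i => by
    have := h1 i; linear_combination this
  have hco : IsCoprime (u : ℤ) (v : ℤ) := Nat.isCoprime_iff_coprime.mpr huv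
  rcases Nat.lt_or_ge u 2 with hu2 | hu2
  · apply hsg
    refine ⟨v, by omega, dvd_mul_left _ _, fun i => ?_⟩
    exact hco.symm.dvd_of_dvd_mul_left ⟨b * p i + c i, (h2 i).symm⟩
  · apply hpg
    refine ⟨u, hu2, dvd_mul_left _ _, fun i => ?_⟩
    exact hco.dvd_of_dvd_mul_left ⟨b * s i + c i, h2 i⟩

lemma sum_inv_sq (N : ℕ) (hN : 2 ≤ N) : ∑ n ∈ Finset.Icc 2 N, (1 : ℝ) / (n : ℝ) ^ 2 ≤ 3 / 4 - 1 / N := by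
  induction N, hN using Nat.le_induction with
  | base => norm_num
  | succ k hk ih =>
    rw [Finset.sum_Icc_succ_top (by omega)]
    have hk0 : (0 : ℝ) < k := by exact_mod_cast (by omega : 0 < k)
    have : (1 : ℝ) / ((k + 1 : ℕ) : ℝ) ^ 2 ≤ 1 / k - 1 / ((k + 1 : ℕ) : ℝ) := by
      push_cast
      rw [div_sub_div _ _ (by positivity) (by positivity), div_le_div_iff₀ (by positivity) (by positivity)]
      nlinarith
    linarith

lemma local_lower (z y : Fin 2 → ℝ) (ρ : ℝ) (hρ : 0 < ρ) (hz : Metric.closedBall z ρ ⊆ unitBox)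
    (q : ℕ) (hq : 0 < q) (a : ℝ) (ha : 0 < a) (ha2 : a ≤ 1 / 2) (haq : a / q ≤ ρ / 2)
    (b : ℤ) (c : Fin 2 → ℤ) (hbc : primVec b c)
    (hL1 : 1 ≤ q * ρ)
    (hL : (q * ρ) ^ 2 / 8 ≤ (q * ρ - 1) ^ 2 - 3 / 4 * (q * ρ) ^ 2 - (q * ρ + 1) * q.divisors.card) :
    1 / 8 * volume.real (Metric.closedBall z ρ) * a ^ 2 ≤
      volume.real (unitBox ∩ goodSet q a y b c ∩ Metric.closedBall z ρ) := by
  classical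
  have hqR : (0 : ℝ) < q := by exact_mod_cast hq
  set L : ℝ := q * ρ with hLdef
  set lo : Fin 2 → ℝ := fun i => q * (z i - ρ / 2) - y i with hlo
  set I : Fin 2 → Finset ℤ := fun i => Finset.Icc ⌈lo i⌉ ⌊lo i + L⌋ with hI
  have hIm : ∀ i, ∀ t ∈ I i, lo i ≤ t ∧ (t : ℝ) ≤ lo i + L := by
    intro i t ht
    rw [hI, Finset.mem_Icc] at ht
    exact ⟨Int.ceil_le.mp ht.1, Int.le_floor.mp ht.2⟩
  have hIc : ∀ i, L - 1 ≤ ((I i).card : ℝ) := by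
    intro i
    rw [hI]; simp only [Int.card_Icc]
    have h1 : (⌊lo i + L⌋ + 1 - ⌈lo i⌉ : ℤ) ≤ ((⌊lo i + L⌋ + 1 - ⌈lo i⌉).toNat : ℤ) := Int.self_le_toNat _
    have h2 : ((⌊lo i + L⌋ + 1 - ⌈lo i⌉ : ℤ) : ℝ) ≤ ((⌊lo i + L⌋ + 1 - ⌈lo i⌉).toNat : ℝ) := by exact_mod_cast h1
    refine le_trans ?_ h2
    push_cast
    linarith [Int.lt_floor_add_one (lo i + L), Int.ceil_lt_add_one (lo i)]
  set P := Fintype.piFinset I with hP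
  have hPc : (L - 1) ^ 2 ≤ (P.card : ℝ) := by
    rw [hP, Fintype.card_piFinset, Fin.prod_univ_two, sq]; push_cast
    have := hIc 0
    have := hIc 1
    have : 0 ≤ L - 1 := by linarith
    gcongr
  set G := P.filter (fun p => goodNum q b c p) with hG
  set Bd : ℕ → Finset (Fin 2 → ℤ) := fun n => Fintype.piFinset fun i => (I i).filter fun t => (n : ℤ) ∣ b * t + c i with hBd
  set Dv := q.divisors.filter (fun n => 2 ≤ n) with hDv
  have hBdc : ∀ n ∈ Dv, ((Bd n).card : ℝ) ≤ (L / n + 1) ^ 2 := by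
    intro n hn
    rw [hDv, Finset.mem_filter] at hn
    have hn0 : 0 < n := by omega
    rcases (Bd n).eq_empty_or_nonempty with h | ⟨p, hp⟩
    · rw [h]; simp; positivity
    · rw [hBd, Fintype.mem_piFinset] at hp
      have hcop : IsCoprime (n : ℤ) b := by
        rw [Int.isCoprime_iff_gcd_eq_one]
        have := hbc (Int.gcd n b) (Int.gcd_dvd_right _ _) (fun i => by
          have h1 := (Finset.mem_filter.mp (hp i)).2
          have h2 : ((Int.gcd n b : ℕ) : ℤ) ∣ b * p i + c i := (Int.gcd_dvd_left _ _).trans h1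
          exact (dvd_add_right ((Int.gcd_dvd_right _ _).mul_right _)).mp h2)
        exact Int.isUnit_iff_natAbs_eq.mp this
      have hc1 : ∀ i, (((I i).filter fun t => (n : ℤ) ∣ b * t + c i).card : ℝ) ≤ L / n + 1 := by
        intro i
        apply card_int_mod_le _ (lo i) L (by linarith) _ n hn0
        · intro t ht t' ht'
          have h1 := (Finset.mem_filter.mp ht).2
          have h2 := (Finset.mem_filter.mp ht').2
          have h3 := dvd_sub h1 h2
          have : b * t + c i - (b * t' + c i) = b * (t - t') := by ring
          rw [this] at h3
          exact hcop.dvd_of_dvd_mul_left h3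
        · intro t ht; exact hIm i t (Finset.mem_filter.mp ht).1
      rw [hBd, Fintype.card_piFinset, Fin.prod_univ_two, sq]; push_cast
      have := hc1 0
      have := hc1 1
      have : 0 ≤ L / n + 1 := by positivity
      gcongr
  have hcover : P ⊆ G ∪ Dv.biUnion Bd := by
    intro p hp
    by_cases hg : goodNum q b c p
    · exact Finset.mem_union_left _ (Finset.mem_filter.mpr ⟨hp, hg⟩)
    · apply Finset.mem_union_right
      rw [goodNum, not_not] at hg
      obtain ⟨n, hn2, hnq, hn⟩ := hg
      refine Finset.mem_biUnion.mpr ⟨n, ?_, ?_⟩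
      · rw [hDv, Finset.mem_filter, Nat.mem_divisors]; exact ⟨⟨hnq, hq.ne'⟩, hn2⟩
      · rw [hBd, Fintype.mem_piFinset]
        intro i
        exact Finset.mem_filter.mpr ⟨(Fintype.mem_piFinset.mp hp) i, hn i⟩
  have hsum : ∑ n ∈ Dv, (L / n + 1) ^ 2 ≤ 3 / 4 * L ^ 2 + (L + 1) * q.divisors.card := by
    have h1 : ∀ n ∈ Dv, (L / n + 1) ^ 2 ≤ L ^ 2 * (1 / (n : ℝ) ^ 2) + (L + 1) := by
      intro n hn
      have hn2 : (2 : ℝ) ≤ n := by exact_mod_cast (Finset.mem_filter.mp hn).2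
      have : L / n ≤ L / 2 := by gcongr
      have e : (L / n + 1) ^ 2 = L ^ 2 * (1 / (n : ℝ) ^ 2) + 2 * (L / n) + 1 := by field_simp; ring
      rw [e]; linarith
    refine (Finset.sum_le_sum h1).trans ?_
    rw [Finset.sum_add_distrib, ← Finset.mul_sum, Finset.sum_const, nsmul_eq_mul]
    have h2 : ∑ n ∈ Dv, (1 : ℝ) / (n : ℝ) ^ 2 ≤ 3 / 4 := by
      calc _ ≤ ∑ n ∈ Finset.Icc 2 (q + 1), (1 : ℝ) / (n : ℝ) ^ 2 := by
            apply Finset.sum_le_sum_of_subset_of_nonneg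
            · intro n hn
              rw [hDv, Finset.mem_filter] at hn
              have := Nat.divisor_le hn.1
              rw [Finset.mem_Icc]; omega
            · intro i _ _; positivity
        _ ≤ 3 / 4 - 1 / ((q + 1 : ℕ) : ℝ) := sum_inv_sq _ (by omega)
        _ ≤ 3 / 4 := by
            have : (0 : ℝ) ≤ 1 / ((q + 1 : ℕ) : ℝ) := by positivity
            linarith
    have h3 : (Dv.card : ℝ) ≤ q.divisors.card := by
      exact_mod_cast Finset.card_le_card (Finset.filter_subset _ _)
    have : Dv.card * (L + 1) ≤ q.divisors.card * (L + 1) := by gcongr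
    have : L ^ 2 * ∑ n ∈ Dv, (1 : ℝ) / (n : ℝ) ^ 2 ≤ L ^ 2 * (3 / 4) := by gcongr
    linarith
  have hGc : L ^ 2 / 8 ≤ (G.card : ℝ) := by
    have h1 : (P.card : ℝ) ≤ G.card + ∑ n ∈ Dv, ((Bd n).card : ℝ) := by
      have := (Finset.card_le_card hcover).trans (Finset.card_union_le _ _)
      have h2 := this.trans (Nat.add_le_add_left Finset.card_biUnion_le _)
      exact_mod_cast h2
    have h2 := Finset.sum_le_sum hBdc
    linarith
  set ctr : (Fin 2 → ℤ) → (Fin 2 → ℝ) := fun p i => (p i + y i) / q with hctr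
  have haq0 : 0 < a / q := by positivity
  have hball : ∀ p x, x ∈ Metric.ball (ctr p) (a / q) ↔ ∀ i, |(q : ℝ) * x i - p i - y i| < a := by
    intro p x
    rw [Metric.mem_ball, dist_pi_lt_iff haq0]
    refine forall_congr' fun i => ?_
    rw [Real.dist_eq, lt_div_iff₀ hqR]
    have : |x i - ctr p i| * q = |(q : ℝ) * x i - p i - y i| := by
      nth_rw 1 [← abs_of_pos hqR]
      rw [← abs_mul, hctr]
      congr 1; field_simp; ring
    rw [this]
  have hdisj : (G : Set (Fin 2 → ℤ)).PairwiseDisjoint fun p => Metric.ball (ctr p) (a / q) := by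
    intro p _ p' _ hne
    rw [Function.onFun, Set.disjoint_left]
    intro x hx hx'
    rw [hball] at hx hx'
    apply hne
    ext i
    have h1 := hx i
    have h2 := hx' i
    rw [abs_lt] at h1 h2
    have h3 : |((p i - p' i : ℤ) : ℝ)| < 1 := by
      push_cast; rw [abs_lt]; constructor <;> linarith
    have h4 : |p i - p' i| < 1 := by exact_mod_cast h3
    have := Int.abs_lt_one_iff.mp h4
    omega
  have hsubset : (⋃ p ∈ G, Metric.ball (ctr p) (a / q)) ⊆ unitBox ∩ goodSet q a y b c ∩ Metric.closedBall z ρ := by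
    apply Set.iUnion₂_subset
    intro p hp x hx
    have hcb : x ∈ Metric.closedBall z ρ := by
      rw [Metric.mem_closedBall, dist_pi_le_iff hρ.le]
      intro i
      have h1 : dist (x i) (ctr p i) < a / q := (dist_pi_lt_iff haq0).mp (Metric.mem_ball.mp hx) i
      have h2 : dist (ctr p i) (z i) ≤ ρ / 2 := by
        obtain ⟨h3, h4⟩ := hIm i (p i) ((Fintype.mem_piFinset.mp (Finset.mem_filter.mp hp).1) i)
        rw [Real.dist_eq, abs_le]
        have e : ctr p i - z i = (p i + y i - q * z i) / q := by rw [hctr]; field_simp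
        rw [e, le_div_iff₀ hqR, div_le_iff₀ hqR]
        rw [hlo] at h3 h4
        simp only [hLdef] at h3 h4
        constructor <;> linarith
      linarith [dist_triangle (x i) (ctr p i) (z i)]
    exact ⟨⟨hz hcb, p, (hball p x).mp hx, (Finset.mem_filter.mp hp).2⟩, hcb⟩
  have hvb : ∀ p, volume.real (Metric.ball (ctr p) (a / q)) = (2 * (a / q)) ^ 2 := by
    intro p
    rw [Measure.real, Real.volume_pi_ball _ haq0, ENNReal.toReal_ofReal (by positivity)]; simp
  have hvc : volume.real (Metric.closedBall z ρ) = (2 * ρ) ^ 2 := by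
    rw [Measure.real, Real.volume_pi_closedBall _ hρ.le, ENNReal.toReal_ofReal (by positivity)]; simp
  calc _ = L ^ 2 / 8 * (2 * (a / q)) ^ 2 := by rw [hvc, hLdef]; field_simp
    _ ≤ G.card * (2 * (a / q)) ^ 2 := by gcongr
    _ = ∑ p ∈ G, volume.real (Metric.ball (ctr p) (a / q)) := by
        rw [Finset.sum_congr rfl fun p _ => hvb p, Finset.sum_const, nsmul_eq_mul]
    _ = volume.real (⋃ p ∈ G, Metric.ball (ctr p) (a / q)) := by
        rw [measureReal_biUnion_finset hdisj (fun _ _ => measurableSet_ball)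
          (fun _ _ => measure_ball_lt_top.ne)]
    _ ≤ _ := by
        exact measureReal_mono hsubset
          ((measure_mono Set.inter_subset_right).trans_lt measure_closedBall_lt_top).ne


lemma pair_alg (u v Q a b : ℝ) (hu : 1 ≤ u) (hv : 1 ≤ v) (hQ : 0 < Q) (hQuv : Q < u * v)
    (ha : 0 ≤ a) (hb : 0 ≤ b) :
    (min (a / u) (b / v)) ^ 2 ≤ (a ^ 2 * (Q ^ (-(1 / 4 : ℝ)) * v ^ (-(5 / 4 : ℝ))) +
      b ^ 2 * (Q ^ (-(1 / 4 : ℝ)) * u ^ (-(5 / 4 : ℝ)))) / 2 := by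
  have hu0 : 0 < u := by linarith
  have hv0 : 0 < v := by linarith
  set s := u ^ (1 / 4 : ℝ) with hs
  set t := v ^ (1 / 4 : ℝ) with ht
  set κ := Q ^ (1 / 4 : ℝ) with hκ
  have hs1 : 1 ≤ s := Real.one_le_rpow hu (by norm_num)
  have ht1 : 1 ≤ t := Real.one_le_rpow hv (by norm_num)
  have hs0 : 0 < s := by linarith
  have ht0 : 0 < t := by linarith
  have hκ0 : 0 < κ := by positivity
  have hus : u = s ^ 4 := by
    rw [hs, ← Real.rpow_natCast, ← Real.rpow_mul hu0.le]; norm_num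
  have hvt : v = t ^ 4 := by
    rw [ht, ← Real.rpow_natCast, ← Real.rpow_mul hv0.le]; norm_num
  have hκst : κ ≤ s * t := by
    rw [hκ, hs, ht, ← Real.mul_rpow hu0.le hv0.le]
    gcongr
  have e1 : Q ^ (-(1 / 4 : ℝ)) = 1 / κ := by rw [hκ, Real.rpow_neg hQ.le]; exact (one_div _).symm
  have e2 : v ^ (-(5 / 4 : ℝ)) = 1 / t ^ 5 := by
    rw [Real.rpow_neg hv0.le, one_div, ht, ← Real.rpow_natCast, ← Real.rpow_mul hv0.le]; norm_num
  have e3 : u ^ (-(5 / 4 : ℝ)) = 1 / s ^ 5 := by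
    rw [Real.rpow_neg hu0.le, one_div, hs, ← Real.rpow_natCast, ← Real.rpow_mul hu0.le]; norm_num
  rw [e1, e2, e3]
  have h0 : 0 ≤ min (a / u) (b / v) := by positivity
  calc (min (a / u) (b / v)) ^ 2 ≤ (a / u) * (b / v) := by
        rw [sq]
        exact mul_le_mul (min_le_left _ _) (min_le_right _ _) h0 (by positivity)
    _ = (a / (s * t ^ 3)) * (b / (s ^ 3 * t)) := by rw [hus, hvt]; field_simp
    _ ≤ ((a / (s * t ^ 3)) ^ 2 + (b / (s ^ 3 * t)) ^ 2) / 2 := by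
        nlinarith [sq_nonneg ((a / (s * t ^ 3)) - (b / (s ^ 3 * t)))]
    _ ≤ _ := by
        have i1 : (a / (s * t ^ 3)) ^ 2 ≤ a ^ 2 * (1 / κ * (1 / t ^ 5)) := by
          rw [div_pow, div_eq_mul_inv]
          gcongr
          rw [one_div_mul_one_div, ← one_div]
          apply one_div_le_one_div_of_le (by positivity)
          calc κ * t ^ 5 ≤ (s * t) * t ^ 5 := by gcongr
            _ ≤ s * ((s * t) * t ^ 5) := le_mul_of_one_le_left (by positivity) hs1
            _ = (s * t ^ 3) ^ 2 := by ring
        have i2 : (b / (s ^ 3 * t)) ^ 2 ≤ b ^ 2 * (1 / κ * (1 / s ^ 5)) := by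
          rw [div_pow, div_eq_mul_inv]
          gcongr
          rw [one_div_mul_one_div, ← one_div]
          apply one_div_le_one_div_of_le (by positivity)
          calc κ * s ^ 5 ≤ (s * t) * s ^ 5 := by gcongr
            _ ≤ t * ((s * t) * s ^ 5) := le_mul_of_one_le_left (by positivity) ht1
            _ = (s ^ 3 * t) ^ 2 := by ring
        linarith

lemma zsummable : Summable (fun m : ℕ => (m : ℝ) ^ (-(5 / 4 : ℝ))) :=
  Real.summable_nat_rpow.mpr (by norm_num)

lemma gcd_sum (q : ℕ) (hq : 0 < q) (n : ℕ) :
    ∑ r ∈ Finset.range n, ((r / Nat.gcd q r : ℕ) : ℝ) ^ (-(5 / 4 : ℝ)) ≤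
      q.divisors.card * ∑' m : ℕ, (m : ℝ) ^ (-(5 / 4 : ℝ)) := by
  classical
  calc _ ≤ ∑ r ∈ Finset.range n, ∑ d ∈ q.divisors, if d ∣ r then ((r / d : ℕ) : ℝ) ^ (-(5 / 4 : ℝ)) else 0 := by
        apply Finset.sum_le_sum
        intro r _
        have hmem : Nat.gcd q r ∈ q.divisors := Nat.mem_divisors.mpr ⟨Nat.gcd_dvd_left _ _, hq.ne'⟩
        have := Finset.single_le_sum (f := fun d => if d ∣ r then ((r / d : ℕ) : ℝ) ^ (-(5 / 4 : ℝ)) else 0)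
          (fun d _ => by split_ifs <;> positivity) hmem
        simpa [Nat.gcd_dvd_right] using this
    _ = ∑ d ∈ q.divisors, ∑ r ∈ Finset.range n, if d ∣ r then ((r / d : ℕ) : ℝ) ^ (-(5 / 4 : ℝ)) else 0 :=
        Finset.sum_comm
    _ ≤ ∑ d ∈ q.divisors, ∑' m : ℕ, (m : ℝ) ^ (-(5 / 4 : ℝ)) := by
        apply Finset.sum_le_sum
        intro d hd
        have hd0 : 0 < d := Nat.pos_of_mem_divisors hd
        rw [← Finset.sum_filter]
        have hinj : Set.InjOn (fun r => r / d) ((Finset.range n).filter (fun r => d ∣ r) : Set ℕ) := by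
          intro r hr r' hr' h
          simp only [Finset.coe_filter, Set.mem_ofPred_eq] at hr hr' h
          rw [← Nat.div_mul_cancel hr.2, ← Nat.div_mul_cancel hr'.2, h]
        rw [← Finset.sum_image (f := fun m : ℕ => (m : ℝ) ^ (-(5 / 4 : ℝ))) hinj]
        exact zsummable.sum_le_tsum _ (fun m _ => by positivity)
    _ = _ := by rw [Finset.sum_const, nsmul_eq_mul]

/-- Index of the doubly exponential block of `q`. -/
def blk (q : ℕ) : ℕ := Nat.log 2 (Nat.log 2 q)

lemma blk_le (q : ℕ) (hq : 2 ≤ q) : 2 ^ (2 ^ blk q) ≤ q := by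
  have h1 : Nat.log 2 q ≠ 0 := (Nat.log_pos (by norm_num) hq).ne'
  calc 2 ^ (2 ^ blk q) ≤ 2 ^ (Nat.log 2 q) :=
        Nat.pow_le_pow_right (by norm_num) (Nat.pow_log_le_self 2 h1)
    _ ≤ q := Nat.pow_log_le_self 2 (by omega)

lemma lt_blk (q : ℕ) : q < 2 ^ (2 ^ (blk q + 1)) := by
  calc q < 2 ^ (Nat.log 2 q + 1) := Nat.lt_pow_succ_log_self (by norm_num) q
    _ ≤ 2 ^ (2 ^ (blk q + 1)) :=
        Nat.pow_le_pow_right (by norm_num) (Nat.lt_pow_succ_log_self (by norm_num) _)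

lemma blk_sep (q r : ℕ) (hr : 2 ≤ r) (h : blk q + 2 ≤ blk r) : q ^ 2 ≤ r := by
  calc q ^ 2 ≤ (2 ^ (2 ^ (blk q + 1))) ^ 2 := Nat.pow_le_pow_left (lt_blk q).le 2
    _ = 2 ^ (2 ^ (blk q + 2)) := by rw [← pow_mul]; congr 1
    _ ≤ 2 ^ (2 ^ blk r) := Nat.pow_le_pow_right (by norm_num) (Nat.pow_le_pow_right (by norm_num) h)
    _ ≤ r := blk_le r hr

lemma blk_sq (q : ℕ) : q ≤ (2 ^ (2 ^ blk q)) ^ 2 := by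
  rw [← pow_mul, ← pow_succ]; exact (lt_blk q).le

lemma sep_bound (q r : ℕ) (hq : 2 ≤ q) (hr : 2 ≤ r) (h : blk q + 2 ≤ blk r) (a : ℝ) (ha : 1 / (q : ℝ) ≤ a) :
    1 ≤ a * ((r / Nat.gcd q r : ℕ) : ℝ) := by
  have hqR : (0 : ℝ) < q := by exact_mod_cast (by omega : 0 < q)
  have hg : 0 < Nat.gcd q r := Nat.gcd_pos_of_pos_left _ (by omega)
  have h1 : q ≤ r / Nat.gcd q r := by
    rw [Nat.le_div_iff_mul_le hg]
    calc q * Nat.gcd q r ≤ q * q := Nat.mul_le_mul_left _ (Nat.gcd_le_left _ (by omega))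
      _ = q ^ 2 := (sq q).symm
      _ ≤ r := blk_sep q r hr h
  have h2 : (q : ℝ) ≤ ((r / Nat.gcd q r : ℕ) : ℝ) := by exact_mod_cast h1
  have ha0 : 0 ≤ a := le_trans (by positivity) ha
  calc (1 : ℝ) = 1 / q * q := by field_simp
    _ ≤ _ := by gcongr

lemma pair_bound (q r : ℕ) (hq : 2 ≤ q) (hr : 2 ≤ r) (a b : ℝ) (ha : 1 / (q : ℝ) ≤ a)
    (hb : 1 / (r : ℝ) ≤ b) (ha2 : a ≤ 1 / 2) (y : Fin 2 → ℝ) (B : ℕ → ℤ)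
    (D : ℕ → Fin 2 → ℤ) (hpar : blk q % 2 = blk r % 2) (Q ε : ℕ → ℝ) (hQ : ∀ k, 0 < Q k)
    (hprop : ∀ (d : ℤ) (n : Fin 2 → ℤ), d ≠ 0 → |(d : ℝ)| ≤ Q (blk q) →
      (∀ i, |d * y i + n i| < ε (blk q)) → ∀ i, d * D (blk q) i + B (blk q) * n i = 0)
    (ha3 : 2 * Q (blk q) * a ≤ ε (blk q)) (hb3 : 2 * Q (blk r) * b ≤ ε (blk r)) :
    volume.real (unitBox ∩ goodSet q a y (B (blk q)) (D (blk q)) ∩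
      (unitBox ∩ goodSet r b y (B (blk r)) (D (blk r)))) ≤
    1152 * (a ^ 2 * b ^ 2) +
      36 * (a ^ 2 * ((if q = r then 1 else 0) +
          Q (blk q) ^ (-(1 / 4 : ℝ)) * ((r / Nat.gcd q r : ℕ) : ℝ) ^ (-(5 / 4 : ℝ))) +
        b ^ 2 * ((if r = q then 1 else 0) +
          Q (blk r) ^ (-(1 / 4 : ℝ)) * ((q / Nat.gcd r q : ℕ) : ℝ) ^ (-(5 / 4 : ℝ)))) := by
  have hqR : (0 : ℝ) < q := by exact_mod_cast (by omega : 0 < q)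
  have hrR : (0 : ℝ) < r := by exact_mod_cast (by omega : 0 < r)
  have ha0 : 0 < a := lt_of_lt_of_le (by positivity) ha
  have hb0 : 0 < b := lt_of_lt_of_le (by positivity) hb
  have hg : 0 < Nat.gcd q r := Nat.gcd_pos_of_pos_left _ (by omega)
  have hcop := Nat.coprime_div_gcd_div_gcd hg
  have hu : 0 < q / Nat.gcd q r := Nat.div_pos (Nat.gcd_le_left _ (by omega)) hg
  have hv : 0 < r / Nat.gcd q r := Nat.div_pos (Nat.gcd_le_right _ (by omega)) hg
  have hgu : Nat.gcd q r * (q / Nat.gcd q r) = q := Nat.mul_div_cancel' (Nat.gcd_dvd_left _ _)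
  have hgv : Nat.gcd q r * (r / Nat.gcd q r) = r := Nat.mul_div_cancel' (Nat.gcd_dvd_right _ _)
  have hov := overlap2 (Nat.gcd q r) _ _ hg hu hv hcop y a b ha0.le hb0.le ha2
    (B (blk q)) (B (blk r)) (D (blk q)) (D (blk r))
  rw [hgu, hgv] at hov
  have hsep1 := fun h => sep_bound q r hq hr h a ha
  have hsep2 := fun h => sep_bound r q hr hq h b hb
  rw [Nat.gcd_comm r q] at hsep2 ⊢
  have hdis := fun Q' hbc huQ hvQ hε hne => good_disjoint (Nat.gcd q r) _ _ hu hv hcop hne y a b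
    (ε (blk q)) Q' (B (blk q)) (D (blk q)) hbc huQ hvQ hε
  rw [hgu, hgv] at hdis
  have hne' : q ≠ r → q / Nat.gcd q r ≠ r / Nat.gcd q r := by
    intro h h'
    apply h
    rw [← hgu, h', hgv]
  set u := q / Nat.gcd q r
  set v := r / Nat.gcd q r
  have hu1 : (1 : ℝ) ≤ u := by exact_mod_cast hu
  have hv1 : (1 : ℝ) ≤ v := by exact_mod_cast hv
  have hm0 : 0 ≤ min (a / u) (b / v) := by positivity
  have hma : min (a / u) (b / v) ≤ a / u := min_le_left _ _
  have hmb : min (a / u) (b / v) ≤ b / v := min_le_right _ _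
  have hma' : min (a / u) (b / v) ≤ a := hma.trans (div_le_self ha0.le hu1)
  have hmb' : min (a / u) (b / v) ≤ b := hmb.trans (div_le_self hb0.le hv1)
  have halg := fun h => pair_alg u v (Q (blk q)) a b hu1 hv1 (hQ _) h ha0.le hb0.le
  have hE1 : 0 ≤ Q (blk q) ^ (-(1 / 4 : ℝ)) * (v : ℝ) ^ (-(5 / 4 : ℝ)) := by
    have := hQ (blk q); positivity
  have hE2 : 0 ≤ Q (blk r) ^ (-(1 / 4 : ℝ)) * (u : ℝ) ^ (-(5 / 4 : ℝ)) := by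
    have := hQ (blk r); positivity
  have hA1 : 0 ≤ a ^ 2 * (Q (blk q) ^ (-(1 / 4 : ℝ)) * (v : ℝ) ^ (-(5 / 4 : ℝ))) := by positivity
  have hA2 : 0 ≤ b ^ 2 * (Q (blk r) ^ (-(1 / 4 : ℝ)) * (u : ℝ) ^ (-(5 / 4 : ℝ))) := by positivity
  have hsq : (24 * (a * b) + 6 * min (a / u) (b / v)) ^ 2 ≤
      1152 * (a ^ 2 * b ^ 2) + 72 * min (a / u) (b / v) ^ 2 := by
    nlinarith [sq_nonneg (24 * (a * b) - 6 * min (a / u) (b / v))]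
  have hsep3 : min (a / u) (b / v) ≤ a * b → (24 * (a * b) + 6 * min (a / u) (b / v)) ^ 2 ≤
      1152 * (a ^ 2 * b ^ 2) := by
    intro h
    have hab : 0 ≤ a * b := by positivity
    calc (24 * (a * b) + 6 * min (a / u) (b / v)) ^ 2 ≤ (24 * (a * b) + 6 * (a * b)) ^ 2 := by gcongr
      _ ≤ _ := by nlinarith [sq_nonneg (a * b)]
  set m := min (a / u) (b / v)
  by_cases hqr : q = r
  · rw [if_pos hqr, if_pos hqr.symm]
    have h1 : m ^ 2 ≤ a ^ 2 := by gcongr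
    have h2 : m ^ 2 ≤ b ^ 2 := by gcongr
    nlinarith
  rw [if_neg hqr, if_neg (Ne.symm hqr), zero_add, zero_add]
  by_cases hbk : blk q = blk r
  · by_cases hQuv : Q (blk q) < u * v
    · have := halg hQuv
      rw [← hbk] at hov ⊢
      linarith
    · push Not at hQuv
      have huQ : (u : ℝ) ≤ Q (blk q) := le_trans (le_mul_of_one_le_right (by positivity) hv1) hQuv
      have hvQ : (v : ℝ) ≤ Q (blk q) := le_trans (le_mul_of_one_le_left (by positivity) hu1) hQuv
      have hε : v * a + u * b ≤ ε (blk q) := by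
        rw [← hbk] at hb3
        have i1 : v * a ≤ Q (blk q) * a := by gcongr
        have i2 : u * b ≤ Q (blk q) * b := by gcongr
        linarith
      have hemp := hdis _ hprop huQ hvQ hε (hne' hqr)
      have : unitBox ∩ goodSet q a y (B (blk q)) (D (blk q)) ∩
          (unitBox ∩ goodSet r b y (B (blk r)) (D (blk r))) = ∅ := by
        rw [← hbk]
        apply Set.eq_empty_of_subset_empty
        rw [← hemp]
        exact fun x hx => ⟨hx.1.2, hx.2.2⟩
      rw [this, measureReal_empty]
      positivity
  · have hmab : m ≤ a * b := by
      rcases (by omega : blk q + 2 ≤ blk r ∨ blk r + 2 ≤ blk q) with h | h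
      · refine hmb.trans ?_
        rw [div_le_iff₀ (by positivity)]
        nlinarith [hsep1 h]
      · refine hma.trans ?_
        rw [div_le_iff₀ (by positivity)]
        nlinarith [hsep2 h]
    have := hsep3 hmab
    linarith

lemma ev_local (ρ : ℝ) (hρ : 0 < ρ) : ∀ᶠ q : ℕ in atTop, 1 / (q : ℝ) ≤ ρ ∧ 1 ≤ q * ρ ∧
    ((q : ℝ) * ρ) ^ 2 / 8 ≤ (q * ρ - 1) ^ 2 - 3 / 4 * (q * ρ) ^ 2 - (q * ρ + 1) * q.divisors.card := by
  obtain ⟨C2, hC2, hτ⟩ := tau_bound (1 / 2) (by norm_num)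
  have h1 : Tendsto (fun q : ℕ => (q : ℝ) ^ (1 / 2 : ℝ)) atTop atTop :=
    (tendsto_rpow_atTop (by norm_num)).comp tendsto_natCast_atTop_atTop
  have h2 : Tendsto (fun q : ℕ => (q : ℝ)) atTop atTop := tendsto_natCast_atTop_atTop
  filter_upwards [h1.eventually_ge_atTop 1, h1.eventually_ge_atTop (16 * (C2 + 1) / ρ),
    h2.eventually_ge_atTop (1 / ρ), eventually_ge_atTop 1] with q e1 e2 e3 e4
  have hq : (0 : ℝ) < q := by exact_mod_cast e4
  have hq1 : 1 ≤ q * ρ := by rwa [div_le_iff₀ hρ] at e3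
  have hs : (q : ℝ) = (q : ℝ) ^ (1 / 2 : ℝ) * (q : ℝ) ^ (1 / 2 : ℝ) := by
    rw [← Real.rpow_add hq]; norm_num
  have ht := hτ q (by omega)
  refine ⟨?_, hq1, ?_⟩
  · rw [div_le_iff₀ hq]; linarith
  · set s := (q : ℝ) ^ (1 / 2 : ℝ)
    rw [div_le_iff₀ hρ] at e2
    have hL : 16 * (C2 + 1) * s ≤ q * ρ := by
      calc 16 * (C2 + 1) * s ≤ (s * ρ) * s := by gcongr
        _ = q * ρ := by linear_combination (-ρ) * hs
    set L := (q : ℝ) * ρ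
    have hτL : 16 * ((q.divisors.card : ℝ) + 1) ≤ L := by nlinarith
    have h0 : (0 : ℝ) ≤ q.divisors.card := Nat.cast_nonneg _
    nlinarith

lemma core (δ : ℝ) (hδ : 0 < δ) (ψ : ℕ → ℝ) (y : Fin 2 → ℝ) (C0 : ℝ)
    (hC0 : 0 < C0) (q0 par : ℕ)
    (hq0 : ∀ q, q0 ≤ q → 2 ≤ q ∧ ψ q ≤ 1 / 2 ∧ ψ q ≤ C0 * (q : ℝ) ^ (-δ) ∧
      4 * C0 * (q : ℝ) ^ (-(δ / 6)) ≤ 1)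
    (sel : ℕ → Prop) [DecidablePred sel]
    (hsel : ∀ q, sel q → q0 ≤ q ∧ blk q % 2 = par ∧ 1 / (q : ℝ) ≤ ψ q)
    (hdiv : ¬ Summable (fun q => if sel q then ψ q ^ 2 else 0)) :
    volume (unitBox \ approxSet ψ y) = 0 := by
  set N : ℕ → ℝ := fun k => ((2 ^ (2 ^ k) : ℕ) : ℝ) with hN
  have hN1 : ∀ k, 1 ≤ N k := fun k => by
    simp only [hN]; exact_mod_cast Nat.one_le_pow _ _ (by norm_num)
  have hN0 : ∀ k, 0 < N k := fun k => lt_of_lt_of_le one_pos (hN1 k)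
  set Q : ℕ → ℝ := fun k => N k ^ (δ / 3) with hQdef
  have hQ0 : ∀ k, 0 < Q k := fun k => Real.rpow_pos_of_pos (hN0 k) _
  set ε : ℕ → ℝ := fun k => 2 * Q k * (C0 * N k ^ (-δ)) with hεdef
  have hε0 : ∀ k, 0 < ε k := fun k => by
    have := hQ0 k
    have := Real.rpow_pos_of_pos (hN0 k) (-δ)
    simp only [hεdef]; positivity
  have hch : ∀ k, ∃ (b : ℤ) (c : Fin 2 → ℤ), primVec b c ∧ (2 * Q k * ε k ≤ 1 →
      ∀ (D : ℤ) (n : Fin 2 → ℤ), D ≠ 0 → |(D : ℝ)| ≤ Q k →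
      (∀ i, |D * y i + n i| < ε k) → ∀ i, D * c i + b * n i = 0) := by
    intro k
    by_cases h : 2 * Q k * ε k ≤ 1
    · obtain ⟨b, c, h1, h2⟩ := rat_approx y (ε k) (Q k) (hε0 k) h
      exact ⟨b, c, h1, fun _ => h2⟩
    · exact ⟨0, fun _ => 1, fun e _ he => isUnit_of_dvd_one (he 0), fun h' => absurd h' h⟩
  choose B D hprim hprop using hch
  have hNle : ∀ q, 2 ≤ q → N (blk q) ≤ q := fun q hq => by
    simp only [hN]; exact_mod_cast blk_le q hq
  have hNsq : ∀ q : ℕ, (q : ℝ) ≤ N (blk q) ^ (2 : ℝ) := fun q => by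
    rw [Real.rpow_two]; simp only [hN]; exact_mod_cast blk_sq q
  have hQε : ∀ q, sel q → 2 * Q (blk q) * ε (blk q) ≤ 1 := by
    intro q hs
    obtain ⟨h2, -, -, h4⟩ := hq0 q (hsel q hs).1
    have hq : (0 : ℝ) < q := by exact_mod_cast (by omega : 0 < q)
    have e1 : 2 * Q (blk q) * ε (blk q) = 4 * C0 * N (blk q) ^ (-(δ / 3)) := by
      have : N (blk q) ^ (-(δ / 3)) = N (blk q) ^ (δ / 3) * N (blk q) ^ (δ / 3) * N (blk q) ^ (-δ) := by
        rw [← Real.rpow_add (hN0 _), ← Real.rpow_add (hN0 _)]; congr 1; ring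
      rw [this]; simp only [hεdef, hQdef]; ring
    rw [e1]
    refine le_trans ?_ h4
    gcongr 4 * C0 * ?_
    calc N (blk q) ^ (-(δ / 3)) = (N (blk q) ^ (2 : ℝ)) ^ (-(δ / 6)) := by
          rw [← Real.rpow_mul (hN0 _).le]; congr 1; ring
      _ ≤ _ := Real.rpow_le_rpow_of_nonpos hq (hNsq q) (by linarith)
  have ha3 : ∀ q, sel q → 2 * Q (blk q) * ψ q ≤ ε (blk q) := by
    intro q hs
    obtain ⟨h2, -, h3, -⟩ := hq0 q (hsel q hs).1
    have := hQ0 (blk q)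
    simp only [hεdef]
    gcongr
    refine h3.trans ?_
    gcongr C0 * ?_
    exact Real.rpow_le_rpow_of_nonpos (hN0 _) (hNle q h2) (by linarith)
  have hpos : ∀ q, sel q → 0 < ψ q := by
    intro q hs
    obtain ⟨h2, -⟩ := hq0 q (hsel q hs).1
    have hq : (0 : ℝ) < q := by exact_mod_cast (by omega : 0 < q)
    exact lt_of_lt_of_le (by positivity) (hsel q hs).2.2
  set A : ℕ → Set (Fin 2 → ℝ) := fun q =>
    if sel q then unitBox ∩ goodSet q (ψ q) y (B (blk q)) (D (blk q)) else ∅ with hAdef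
  set w : ℕ → ℝ := fun q => if sel q then ψ q ^ 2 else 0 with hwdef
  have hw : ∀ q, 0 ≤ w q := fun q => by simp only [hwdef]; split_ifs <;> positivity
  obtain ⟨C1, hC1, hτ⟩ := tau_bound (δ / 24) (by positivity)
  set Z := ∑' m : ℕ, (m : ℝ) ^ (-(5 / 4 : ℝ)) with hZ
  have hZ0 : 0 ≤ Z := tsum_nonneg fun m => by positivity
  set e : ℕ → ℕ → ℝ := fun q r => w q * ((if q = r then 1 else 0) +
          Q (blk q) ^ (-(1 / 4 : ℝ)) * ((r / Nat.gcd q r : ℕ) : ℝ) ^ (-(5 / 4 : ℝ))) with he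
  have he0 : ∀ q r, 0 ≤ e q r := by
    intro q r
    have := hw q
    have := hQ0 (blk q)
    simp only [he]
    split_ifs <;> positivity
  have hpair : ∀ q r, volume.real (A q ∩ A r) ≤ 1152 * (w q * w r) + 36 * (e q r + e r q) := by
    intro q r
    by_cases hs : sel q
    · by_cases ht : sel r
      · have := pair_bound q r (hq0 q (hsel q hs).1).1 (hq0 r (hsel r ht).1).1 (ψ q) (ψ r)
          (hsel q hs).2.2 (hsel r ht).2.2 (hq0 q (hsel q hs).1).2.1 y B D
          ((hsel q hs).2.1.trans (hsel r ht).2.1.symm) Q ε hQ0 (hprop _ (hQε q hs))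
          (ha3 q hs) (ha3 r ht)
        simp only [hAdef, he, hwdef, if_pos hs, if_pos ht]
        exact this
      · have h1 := he0 q r
        have h2 := he0 r q
        have h3 := mul_nonneg (hw q) (hw r)
        have : A r = ∅ := if_neg ht
        rw [this, Set.inter_empty, measureReal_empty]
        linarith
    · have h1 := he0 q r
      have h2 := he0 r q
      have h3 := mul_nonneg (hw q) (hw r)
      have : A q = ∅ := if_neg hs
      rw [this, Set.empty_inter, measureReal_empty]
      linarith
  have hsum : ∀ n q, q ∈ Finset.range n → ∑ r ∈ Finset.range n, e q r ≤ w q * (1 + C1 * Z) := by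
    intro n q hqn
    by_cases hs : sel q
    · obtain ⟨h2, -⟩ := hq0 q (hsel q hs).1
      have hq : (0 : ℝ) < q := by exact_mod_cast (by omega : 0 < q)
      simp only [he]
      rw [← Finset.mul_sum, Finset.sum_add_distrib, ← Finset.mul_sum]
      apply mul_le_mul_of_nonneg_left _ (hw q)
      apply add_le_add
      · rw [Finset.sum_ite_eq, if_pos hqn]
      · have g1 := gcd_sum q (by omega) n
        have g2 := hτ q (by omega)
        have g3 : Q (blk q) ^ (-(1 / 4 : ℝ)) ≤ (q : ℝ) ^ (-(δ / 24)) := by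
          calc Q (blk q) ^ (-(1 / 4 : ℝ)) = (N (blk q) ^ (2 : ℝ)) ^ (-(δ / 24)) := by
                simp only [hQdef]
                rw [← Real.rpow_mul (hN0 _).le, ← Real.rpow_mul (hN0 _).le]; congr 1; ring
            _ ≤ _ := Real.rpow_le_rpow_of_nonpos hq (hNsq q) (by linarith)
        calc _ ≤ (q : ℝ) ^ (-(δ / 24)) * ((C1 * (q : ℝ) ^ (δ / 24)) * Z) := by
              apply mul_le_mul g3 (g1.trans _) (Finset.sum_nonneg fun r _ => by positivity)
                (by positivity)
              gcongr
          _ = ((q : ℝ) ^ (-(δ / 24)) * (q : ℝ) ^ (δ / 24)) * (C1 * Z) := by ring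
          _ = C1 * Z := by rw [← Real.rpow_add hq]; simp
    · have : w q = 0 := if_neg hs
      simp [he, this]
  have hkey : volume (unitBox \ {x | {q | x ∈ A q}.Infinite}) = 0 := by
    apply bc_full A _ _ w hw _ (1152 + 72 * (1 + C1 * Z)) (1 / 8) (by positivity) (by norm_num)
    · intro n
      set σ := ∑ q ∈ Finset.range n, w q with hσ
      have hσ0 : 0 ≤ σ := Finset.sum_nonneg fun q _ => hw q
      have hE : ∑ q ∈ Finset.range n, ∑ r ∈ Finset.range n, e q r ≤ σ * (1 + C1 * Z) := by
        rw [hσ, Finset.sum_mul]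
        exact Finset.sum_le_sum fun q hq => hsum n q hq
      have hE' : ∑ q ∈ Finset.range n, ∑ r ∈ Finset.range n, e r q ≤ σ * (1 + C1 * Z) := by
        rw [Finset.sum_comm]; exact hE
      calc _ ≤ ∑ q ∈ Finset.range n, ∑ r ∈ Finset.range n,
            (1152 * (w q * w r) + 36 * (e q r + e r q)) :=
            Finset.sum_le_sum fun q _ => Finset.sum_le_sum fun r _ => hpair q r
        _ = 1152 * σ ^ 2 + 36 * (∑ q ∈ Finset.range n, ∑ r ∈ Finset.range n, e q r +
            ∑ q ∈ Finset.range n, ∑ r ∈ Finset.range n, e r q) := by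
            simp only [Finset.sum_add_distrib, ← Finset.mul_sum]
            rw [← Finset.sum_mul, ← hσ]; ring
        _ ≤ 1152 * σ ^ 2 + 36 * (σ * (1 + C1 * Z) + σ * (1 + C1 * Z)) := by gcongr
        _ ≤ _ := by
            have : 0 ≤ C1 * Z := by positivity
            nlinarith [mul_nonneg this (sq_nonneg σ), sq_nonneg σ]
    · intro z ρ hρ hz
      filter_upwards [ev_local ρ hρ] with q hq
      by_cases hs : sel q
      · obtain ⟨h2, h3, -⟩ := hq0 q (hsel q hs).1
        have hqR : (0 : ℝ) < q := by exact_mod_cast (by omega : 0 < q)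
        simp only [hAdef, hwdef, if_pos hs]
        refine local_lower z y ρ hρ hz q (by omega) (ψ q) (hpos q hs) h3 ?_ _ _ (hprim _) hq.2.1 hq.2.2
        calc ψ q / q ≤ (1 / 2) / q := by gcongr
          _ = (1 / q) / 2 := by ring
          _ ≤ ρ / 2 := by linarith [hq.1]
      · have h1 : w q = 0 := if_neg hs
        have h2 : A q = ∅ := if_neg hs
        simp [h1, h2]
    · intro q
      simp only [hAdef]
      split_ifs
      · exact measurableSet_unitBox.inter (isOpen_goodSet _ _ _ _ _).measurableSet
      · exact MeasurableSet.empty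
    · intro q
      simp only [hAdef]
      split_ifs
      · exact Set.inter_subset_left
      · exact Set.empty_subset _
    · exact (not_summable_iff_tendsto_nat_atTop_of_nonneg hw).mp hdiv
  refine measure_mono_null ?_ hkey
  rintro x ⟨hx, hxn⟩
  refine ⟨hx, fun hinf => hxn ⟨hx, ?_⟩⟩
  apply Set.Infinite.of_image Prod.fst
  refine hinf.mono ?_
  intro q hqA
  have hqA : x ∈ A q := hqA
  by_cases hs : sel q
  · have h2 : A q = unitBox ∩ goodSet q (ψ q) y (B (blk q)) (D (blk q)) := if_pos hs
    rw [h2] at hqA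
    obtain ⟨-, p, hp, -⟩ := hqA
    refine ⟨(q, p), ?_, rfl⟩
    change ‖(q : ℝ) • x - (fun i => (p i : ℝ)) - y‖ < ψ q
    rw [pi_norm_lt_iff (hpos q hs)]
    intro i
    simpa [Real.norm_eq_abs] using hp i
  · have h2 : A q = ∅ := if_neg hs
    rw [h2] at hqA
    exact absurd hqA (Set.notMem_empty _)

/-- Main theorem: if `ψ(q) = O(q^{-δ})` for some `δ > 0` and `∑ ψ(q)² = ∞`, then for any
`y ∈ ℝ²` the set `𝒜_{1,2}(ψ,y)` has Lebesgue measure one. -/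
theorem main_theorem (δ : ℝ) (hδ : 0 < δ) (ψ : ℕ → ℝ) (hψ : ∀ q, 0 ≤ ψ q)
    (hO : (fun q : ℕ => ψ q) =O[atTop] (fun q : ℕ => (q : ℝ) ^ (-δ)))
    (y : Fin 2 → ℝ)
    (hdiv : ¬ Summable (fun q : ℕ => ψ q ^ 2)) :
    volume (approxSet ψ y) = 1 := by
  classical
  suffices h : volume (unitBox \ approxSet ψ y) = 0 by
    have hsub : approxSet ψ y ⊆ unitBox := fun x hx => hx.1
    apply le_antisymm
    · rw [← volume_unitBox]; exact measure_mono hsub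
    · rw [← volume_unitBox]
      calc volume unitBox ≤ volume (approxSet ψ y ∪ (unitBox \ approxSet ψ y)) :=
            measure_mono fun x hx => by
              by_cases hxa : x ∈ approxSet ψ y
              · exact Or.inl hxa
              · exact Or.inr ⟨hx, hxa⟩
        _ ≤ volume (approxSet ψ y) + volume (unitBox \ approxSet ψ y) := measure_union_le _ _
        _ = _ := by rw [h, add_zero]
  obtain ⟨C0, hC0, hCb⟩ := hO.exists_pos
  have hlim : ∀ s : ℝ, 0 < s → Tendsto (fun q : ℕ => (q : ℝ) ^ (-s)) atTop (nhds 0) := fun s hs =>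
    (tendsto_rpow_neg_atTop hs).comp tendsto_natCast_atTop_atTop
  have hl1 : ∀ᶠ q : ℕ in atTop, C0 * (q : ℝ) ^ (-δ) ≤ 1 / 2 := by
    have := (hlim δ hδ).const_mul C0
    rw [mul_zero] at this
    exact this.eventually_le_const (by norm_num)
  have hl2 : ∀ᶠ q : ℕ in atTop, 4 * C0 * (q : ℝ) ^ (-(δ / 6)) ≤ 1 := by
    have := (hlim (δ / 6) (by positivity)).const_mul (4 * C0)
    rw [mul_zero] at this
    exact this.eventually_le_const (by norm_num)
  have hev : ∀ᶠ q : ℕ in atTop, 2 ≤ q ∧ ψ q ≤ 1 / 2 ∧ ψ q ≤ C0 * (q : ℝ) ^ (-δ) ∧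
      4 * C0 * (q : ℝ) ^ (-(δ / 6)) ≤ 1 := by
    filter_upwards [hl1, hl2, eventually_ge_atTop 2, hCb.bound] with q h1 h2 h3 h4
    have h5 : ψ q ≤ C0 * (q : ℝ) ^ (-δ) := by
      rw [Real.norm_of_nonneg (hψ q), Real.norm_of_nonneg (by positivity)] at h4
      exact h4
    exact ⟨h3, h5.trans h1, h5, h2⟩
  obtain ⟨q0, hq0⟩ := eventually_atTop.mp hev
  let sel : ℕ → ℕ → Prop := fun par q => q0 ≤ q ∧ blk q % 2 = par ∧ 1 / (q : ℝ) ≤ ψ q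
  by_cases h0 : Summable (fun q => if sel 0 q then ψ q ^ 2 else 0)
  · by_cases h1 : Summable (fun q => if sel 1 q then ψ q ^ 2 else 0)
    · exfalso
      apply hdiv
      have h2 : Summable (fun q : ℕ => 1 / (q : ℝ) ^ 2) := Real.summable_one_div_nat_pow.mpr (by norm_num)
      have h3 := (h0.add h1).add h2
      rw [← summable_nat_add_iff q0] at h3 ⊢
      refine Summable.of_nonneg_of_le (fun q => sq_nonneg _) (fun q => ?_) h3
      have hge : q0 ≤ q + q0 := by omega
      generalize q + q0 = m at hge
      by_cases hm : 1 / (m : ℝ) ≤ ψ m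
      · have : (0 : ℝ) ≤ 1 / (m : ℝ) ^ 2 := by positivity
        rcases Nat.mod_two_eq_zero_or_one (blk m) with hb | hb
        · have s0 : sel 0 m := ⟨hge, hb, hm⟩
          rw [if_pos s0]
          have : (0 : ℝ) ≤ if sel 1 m then ψ m ^ 2 else 0 := by split_ifs <;> positivity
          linarith
        · have s0 : sel 1 m := ⟨hge, hb, hm⟩
          rw [if_pos s0]
          have : (0 : ℝ) ≤ if sel 0 m then ψ m ^ 2 else 0 := by split_ifs <;> positivity
          linarith
      · push Not at hm
        have i0 : (0 : ℝ) ≤ if sel 0 m then ψ m ^ 2 else 0 := by split_ifs <;> positivity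
        have i1 : (0 : ℝ) ≤ if sel 1 m then ψ m ^ 2 else 0 := by split_ifs <;> positivity
        have i2 : ψ m ^ 2 ≤ (1 / (m : ℝ)) ^ 2 := pow_le_pow_left₀ (hψ m) hm.le 2
        rw [div_pow, one_pow] at i2
        linarith
    · exact core δ hδ ψ y C0 hC0 q0 1 hq0 (sel 1) (fun q h => h) h1
  · exact core δ hδ ψ y C0 hC0 q0 0 hq0 (sel 0) (fun q h => h) h0
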